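/- arXiv:2306.14183 — 2 statements merged into one kernel-verified Lean document; each statement's English description precedes it below -/
import Mathlib

section
/- Let (V₁, V₂) be a commuting pair of C₀-semigroups of isometries on a complex Hilbert space H that is dual doubly commuting (its dual pair with respect to a minimal unitary extension is doubly commuting). Then H decomposes as an orthogonal direct sum H = H_m ⊕ H_{p,u} ⊕ H_{u,p} ⊕ H_{u,u} of closed subspaces, each reducing both V₁ and V₂, such that: (1) the restricted pair (V₁|_{H_m}, V₂|_{H_m}) is a modified-bishift-semigroup; (2) V₁|_{H_{p,u}} is completely nonunitary and V₂|_{H_{p,u}} is a unitary semigroup; (3) V₁|_{H_{u,p}} is a unitary semigroup and V₂|_{H_{u,p}} is completely nonunitary; (4) both V₁|_{H_{u,u}} and V₂|_{H_{u,u}} are unitary semigroups. -/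
open MeasureTheory ContinuousLinearMap
open scoped ENNReal NNReal InnerProductSpace ComplexInnerProductSpace

noncomputable section

section SemigroupDefs

variable {G : Type} [NormedAddCommGroup G] [InnerProductSpace ℂ G] [CompleteSpace G]

/-- A (C₀-) strongly continuous one-parameter semigroup of bounded operators. -/
def IsC0Semigroup (V : ℝ≥0 → G →L[ℂ] G) : Prop :=
  V 0 = 1 ∧ (∀ s t : ℝ≥0, V (s + t) = V s ∘L V t) ∧ ∀ x : G, Continuous fun t : ℝ≥0 => V t x

/-- A C₀-semigroup of isometries. -/
def IsIsometrySemigroup (V : ℝ≥0 → G →L[ℂ] G) : Prop :=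
  IsC0Semigroup V ∧ ∀ (t : ℝ≥0) (x : G), ‖V t x‖ = ‖x‖

/-- The closed subspace `L` reduces the semigroup `V`: it is invariant under every `V t`
and every `(V t)*`. -/
def ReducedBy (V : ℝ≥0 → G →L[ℂ] G) (L : Submodule ℂ G) : Prop :=
  (∀ t : ℝ≥0, ∀ x ∈ L, V t x ∈ L) ∧ ∀ t : ℝ≥0, ∀ x ∈ L, adjoint (V t) x ∈ L

/-- `T` restricts to a unitary operator on the subspace `L`. -/
def RestrictsToUnitaryOn (T : G →L[ℂ] G) (L : Submodule ℂ G) : Prop :=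
  (∀ x ∈ L, T x ∈ L) ∧ (∀ x ∈ L, ‖T x‖ = ‖x‖) ∧ ∀ y ∈ L, ∃ x ∈ L, T x = y

/-- Every `V t` restricts to a unitary operator on the subspace `L`. -/
def IsUnitarySemigroupOn (V : ℝ≥0 → G →L[ℂ] G) (L : Submodule ℂ G) : Prop :=
  ∀ t : ℝ≥0, RestrictsToUnitaryOn (V t) L

/-- A unitary C₀-semigroup: every `V t` is a surjective isometry. -/
def IsUnitarySemigroup (V : ℝ≥0 → G →L[ℂ] G) : Prop :=
  IsC0Semigroup V ∧ ∀ t : ℝ≥0, (∀ x : G, ‖V t x‖ = ‖x‖) ∧ Function.Surjective (V t)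

/-- `V` is completely nonunitary on the subspace `K`: there is no nonzero closed subspace
of `K` reducing `V` on which every `V t` restricts to a unitary. -/
def IsCnuOn (V : ℝ≥0 → G →L[ℂ] G) (K : Submodule ℂ G) : Prop :=
  ∀ L : Submodule ℂ G, IsClosed (L : Set G) → L ≤ K → ReducedBy V L →
    IsUnitarySemigroupOn V L → L = ⊥

/-- A completely nonunitary semigroup. -/
def IsCnu (V : ℝ≥0 → G →L[ℂ] G) : Prop := IsCnuOn V ⊤

/-- Two semigroups commute. -/
def SgCommute (V1 V2 : ℝ≥0 → G →L[ℂ] G) : Prop :=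
  ∀ t s : ℝ≥0, V1 t ∘L V2 s = V2 s ∘L V1 t

/-- Two semigroups doubly commute. -/
def SgDoublyCommute (V1 V2 : ℝ≥0 → G →L[ℂ] G) : Prop :=
  SgCommute V1 V2 ∧ ∀ t s : ℝ≥0, V1 t ∘L adjoint (V2 s) = adjoint (V2 s) ∘L V1 t

/-- A completely nonunitary pair of semigroups: no nonzero closed subspace reduces both
semigroups in such a way that both restrict to unitary semigroups. -/
def IsCnuPair (V1 V2 : ℝ≥0 → G →L[ℂ] G) : Prop :=
  ∀ L : Submodule ℂ G, IsClosed (L : Set G) → ReducedBy V1 L → ReducedBy V2 L →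
    IsUnitarySemigroupOn V1 L → IsUnitarySemigroupOn V2 L → L = ⊥

/-- A strongly continuous one-parameter unitary group. -/
def IsUnitaryGroup (U : ℝ → G →L[ℂ] G) : Prop :=
  U 0 = 1 ∧ (∀ s t : ℝ, U (s + t) = U s ∘L U t) ∧
  (∀ (t : ℝ) (x : G), ‖U t x‖ = ‖x‖) ∧ (∀ t : ℝ, Function.Surjective (U t)) ∧
  ∀ x : G, Continuous fun t : ℝ => U t x

/-- Two subspaces are mutually orthogonal. -/
def OrthoSubspaces (A B : Submodule ℂ G) : Prop :=
  ∀ x ∈ A, ∀ y ∈ B, ⟪x, y⟫_ℂ = 0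

end SemigroupDefs

/-- The closed first quadrant `ℝ₊² ⊆ ℝ²`. -/
def QQ : Set (ℝ × ℝ) := {p | 0 ≤ p.1 ∧ 0 ≤ p.2}

/-- Lebesgue measure on `ℝ²` restricted to the quadrant `ℝ₊²`; `Lp F 2 nuQ` plays the
role of `L²(ℝ₊², F)`. -/
def nuQ : Measure (ℝ × ℝ) := (volume : Measure (ℝ × ℝ)).restrict QQ

/-- Lebesgue measure on `ℝ²` restricted to `ℝ² ∖ ℝ₊²`; `Lp F 2 nuQc` plays the role of
`L²(ℝ² ∖ ℝ₊², F)`. -/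
def nuQc : Measure (ℝ × ℝ) := (volume : Measure (ℝ × ℝ)).restrict QQᶜ

/-- `(V1, V2)` is a bishift-semigroup: it is jointly unitarily equivalent to the pair
`(𝒮₁^F, 𝒮₂^F)` of shift semigroups on `L²(ℝ₊², F)` for some Hilbert space `F`. -/
def IsBishiftPair {G : Type} [NormedAddCommGroup G] [InnerProductSpace ℂ G] [CompleteSpace G]
    (V1 V2 : ℝ≥0 → G →L[ℂ] G) : Prop :=
  ∃ (F : Type) (_ : NormedAddCommGroup F) (_ : InnerProductSpace ℂ F) (_ : CompleteSpace F)
    (Z : G ≃ₗᵢ[ℂ] Lp F 2 nuQ),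
    ∀ (t : ℝ≥0) (x : G),
      ((Z (V1 t x) : ℝ × ℝ → F) =ᵐ[nuQ]
        fun p => if (t : ℝ) ≤ p.1 then (Z x : ℝ × ℝ → F) (p.1 - (t : ℝ), p.2) else 0) ∧
      ((Z (V2 t x) : ℝ × ℝ → F) =ᵐ[nuQ]
        fun p => if (t : ℝ) ≤ p.2 then (Z x : ℝ × ℝ → F) (p.1, p.2 - (t : ℝ)) else 0)

/-- `(U1, U2)` on the ambient space `G` is a minimal unitary extension of the commuting
pair of semigroups `(V1, V2)` living on the closed subspace `K` of `G`. -/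
def IsMinimalUnitaryExtension {G : Type} [NormedAddCommGroup G] [InnerProductSpace ℂ G]
    [CompleteSpace G] (K : Submodule ℂ G) (V1 V2 : ℝ≥0 → ↥K →L[ℂ] ↥K)
    (U1 U2 : ℝ → G →L[ℂ] G) : Prop :=
  IsUnitaryGroup U1 ∧ IsUnitaryGroup U2 ∧
  (∀ s t : ℝ, U1 s ∘L U2 t = U2 t ∘L U1 s) ∧
  (∀ (t : ℝ≥0) (h : ↥K),
    U1 (t : ℝ) (h : G) = (V1 t h : G) ∧ U2 (t : ℝ) (h : G) = (V2 t h : G)) ∧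
  (Submodule.span ℂ
    {x : G | ∃ (t s : ℝ) (h : ↥K), x = U1 t (U2 s (h : G))}).topologicalClosure = ⊤

/-- The dual pair of `(V1, V2)` (with respect to the minimal unitary extension `(U1, U2)`
of `(V1, V2)` living on `Kᗮ`, given by `Ṽⱼ,t = (Ūⱼ,t)* |_{Kᗮ}`) is doubly commuting:
`Ṽ₁,t Ṽ₂,s = Ṽ₂,s Ṽ₁,t` and `Ṽ₁,t (Ṽ₂,s)* = (Ṽ₂,s)* Ṽ₁,t`.  Here `(Ṽ₂,s)* x`, for
`x ∈ Kᗮ`, is characterised as the unique `w ∈ Kᗮ` with `U2 s x - w ∈ K`. -/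
def DualDoublyCommutes {G : Type} [NormedAddCommGroup G] [InnerProductSpace ℂ G]
    [CompleteSpace G] (K : Submodule ℂ G) (U1 U2 : ℝ → G →L[ℂ] G) : Prop :=
  ∀ t s : ℝ, 0 ≤ t → 0 ≤ s → ∀ x ∈ Kᗮ,
    (adjoint (U1 t) (adjoint (U2 s) x) = adjoint (U2 s) (adjoint (U1 t) x)) ∧
    ∀ w w' : G, w ∈ Kᗮ → U2 s x - w ∈ K → w' ∈ Kᗮ →
      U2 s (adjoint (U1 t) x) - w' ∈ K → adjoint (U1 t) w = w'

/-- The restriction of the semigroup `V` to an invariant subspace `L`. -/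
def SGRestrict {G : Type} [NormedAddCommGroup G] [InnerProductSpace ℂ G]
    (V : ℝ≥0 → G →L[ℂ] G) (L : Submodule ℂ G)
    (hL : ∀ t : ℝ≥0, ∀ x ∈ L, V t x ∈ L) : ℝ≥0 → ↥L →L[ℂ] ↥L := fun t =>
  { toLinearMap := (V t).toLinearMap.restrict (fun x hx => hL t x hx)
    cont := Continuous.subtype_mk ((V t).continuous.comp continuous_subtype_val) _ }

/-- The dual of the pair extended by the unitary groups `(U1, U2)`, i.e. the pair
`(Ṽ₁, Ṽ₂)` on `Kᗮ` given by `Ṽⱼ,t = (Ūⱼ,t)*|_{Kᗮ}`, is a bishift-semigroup: there is a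
unitary `Z : Kᗮ → L²(ℝ₊², F)` carrying `(Ṽ₁, Ṽ₂)` to the pair of shift semigroups. -/
def DualIsBishift {G : Type} [NormedAddCommGroup G] [InnerProductSpace ℂ G]
    [CompleteSpace G] (K : Submodule ℂ G) (U1 U2 : ℝ → G →L[ℂ] G) : Prop :=
  ∃ (F : Type) (_ : NormedAddCommGroup F) (_ : InnerProductSpace ℂ F) (_ : CompleteSpace F)
    (Z : ↥Kᗮ ≃ₗᵢ[ℂ] Lp F 2 nuQ),
    ∀ t : ℝ, 0 ≤ t → ∀ f g : Lp F 2 nuQ,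
      (((g : ℝ × ℝ → F) =ᵐ[nuQ]
          fun p => if t ≤ p.1 then (f : ℝ × ℝ → F) (p.1 - t, p.2) else 0) →
        adjoint (U1 t) (Z.symm f : G) = (Z.symm g : G)) ∧
      (((g : ℝ × ℝ → F) =ᵐ[nuQ]
          fun p => if t ≤ p.2 then (f : ℝ × ℝ → F) (p.1, p.2 - t) else 0) →
        adjoint (U2 t) (Z.symm f : G) = (Z.symm g : G))

/-- `(V1, V2)` is a modified-bishift-semigroup: a completely nonunitary commuting pair of
C₀-semigroups of isometries whose dual (with respect to a minimal unitary extension) is a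
bishift-semigroup. -/
def IsModifiedBishift {G : Type} [NormedAddCommGroup G] [InnerProductSpace ℂ G]
    [CompleteSpace G] (V1 V2 : ℝ≥0 → G →L[ℂ] G) : Prop :=
  IsIsometrySemigroup V1 ∧ IsIsometrySemigroup V2 ∧ SgCommute V1 V2 ∧ IsCnuPair V1 V2 ∧
  ∃ (Ebar : Type) (_ : NormedAddCommGroup Ebar) (_ : InnerProductSpace ℂ Ebar)
    (_ : CompleteSpace Ebar) (J : G →ₗᵢ[ℂ] Ebar) (U1 U2 : ℝ → Ebar →L[ℂ] Ebar),
    IsUnitaryGroup U1 ∧ IsUnitaryGroup U2 ∧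
    (∀ s t : ℝ, U1 s ∘L U2 t = U2 t ∘L U1 s) ∧
    (∀ (t : ℝ≥0) (x : G), U1 (t : ℝ) (J x) = J (V1 t x) ∧ U2 (t : ℝ) (J x) = J (V2 t x)) ∧
    (Submodule.span ℂ
      {y : Ebar | ∃ (t s : ℝ) (x : G), y = U1 t (U2 s (J x))}).topologicalClosure = ⊤ ∧
    DualIsBishift (LinearMap.range J.toLinearMap) U1 U2

section Wold
variable {E : Type} [NormedAddCommGroup E] [InnerProductSpace ℂ E] [CompleteSpace E]

/-- contraction semigroup -/
structure CSg (C : ℝ≥0 → E →L[ℂ] E) : Prop where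
  zero : C 0 = 1
  add : ∀ s t : ℝ≥0, C (s + t) = C s ∘L C t
  cont : ∀ x : E, Continuous fun t : ℝ≥0 => C t x
  le : ∀ (t : ℝ≥0) (x : E), ‖C t x‖ ≤ ‖x‖

def orb (C : ℝ≥0 → E →L[ℂ] E) (x : E) (s : ℝ) : E := Real.exp (-s) • C s.toNNReal x

theorem orb_cont {C : ℝ≥0 → E →L[ℂ] E} (h : CSg C) (x : E) : Continuous (orb C x) := by
  unfold orb
  have := (h.cont x).comp continuous_real_toNNReal
  exact (Real.continuous_exp.comp continuous_neg).smul this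

theorem orb_int {C : ℝ≥0 → E →L[ℂ] E} (h : CSg C) (x : E) :
    IntegrableOn (orb C x) (Set.Ioi 0) := by
  have h1 : IntegrableOn (fun s : ℝ => Real.exp (-s) * ‖x‖) (Set.Ioi 0) :=
    (integrableOn_exp_neg_Ioi 0).mul_const _
  refine Integrable.mono' h1 (orb_cont h x).aestronglyMeasurable ?_
  refine Filter.Eventually.of_forall fun s => ?_
  simp only [orb, norm_smul, Real.norm_eq_abs, Real.abs_exp]
  exact mul_le_mul_of_nonneg_left (h.le _ _) (Real.exp_pos _).le

def RR {C : ℝ≥0 → E →L[ℂ] E} (h : CSg C) : E →ₗ[ℂ] E where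
  toFun x := ∫ s in Set.Ioi (0:ℝ), orb C x s
  map_add' x y := by
    rw [← integral_add (orb_int h x) (orb_int h y)]
    congr 1; ext s; simp [orb]
  map_smul' c x := by
    rw [RingHom.id_apply, ← integral_smul]
    congr 1; ext s; simp only [orb, map_smul]; rw [smul_comm]

theorem RR_shift {C : ℝ≥0 → E →L[ℂ] E} (h : CSg C) (x : E) (t : ℝ) (ht : 0 ≤ t) :
    C t.toNNReal (RR h x) = Real.exp t • (RR h x - ∫ s in (0:ℝ)..t, orb C x s) := by
  have e1 : C t.toNNReal (RR h x) = ∫ s in Set.Ioi (0:ℝ), C t.toNNReal (orb C x s) :=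
    (ContinuousLinearMap.integral_comp_comm _ (orb_int h x)).symm
  have e2 : ∀ s ∈ Set.Ioi (0:ℝ), C t.toNNReal (orb C x s) = Real.exp t • orb C x (s + t) := by
    intro s hs
    simp only [orb]
    rw [ContinuousLinearMap.map_smul_of_tower, smul_smul, ← Real.exp_add, add_comm s t,
      Real.toNNReal_add ht (le_of_lt hs), h.add]
    simp
  rw [e1, setIntegral_congr_fun measurableSet_Ioi e2, integral_smul]
  congr 1
  have e3 : ∫ s in Set.Ioi (0:ℝ), orb C x (s + t) = ∫ s in Set.Ioi t, orb C x s := by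
    have := (measurePreserving_add_right (volume : Measure ℝ) t).setIntegral_preimage_emb
      (measurableEmbedding_addRight t) (orb C x) (Set.Ioi t)
    simpa using this
  rw [e3, intervalIntegral.integral_of_le ht]
  have e4 : RR h x = ∫ s in Set.Ioi (0:ℝ), orb C x s := rfl
  rw [e4, ← Set.Ioc_union_Ioi_eq_Ioi ht, setIntegral_union (Set.Ioc_disjoint_Ioi_same)
    measurableSet_Ioi ((orb_int h x).mono_set Set.Ioc_subset_Ioi_self)
    ((orb_int h x).mono_set (Set.Ioi_subset_Ioi ht))]
  simp

theorem RR_deriv0 {C : ℝ≥0 → E →L[ℂ] E} (h : CSg C) (x : E) :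
    HasDerivWithinAt (fun t : ℝ => C t.toNNReal (RR h x)) (RR h x - x) (Set.Ici 0) 0 := by
  have h1 : HasDerivAt (fun t : ℝ => ∫ s in (0:ℝ)..t, orb C x s) (orb C x 0) 0 :=
    intervalIntegral.integral_hasDerivAt_right ((orb_cont h x).intervalIntegrable _ _)
      ((orb_cont h x).stronglyMeasurableAtFilter _ _) (orb_cont h x).continuousAt
  have h2 := (Real.hasDerivAt_exp 0).smul (h1.const_sub (RR h x))
  have h3 : orb C x 0 = x := by simp [orb, h.zero]
  rw [h3] at h2
  have h4 := h2.hasDerivWithinAt (s := Set.Ici (0:ℝ))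
  refine (h4.congr_of_mem (fun t ht => RR_shift h x t ht) (by simp)).congr_deriv ?_
  simp; abel

theorem RR_deriv {C : ℝ≥0 → E →L[ℂ] E} (h : CSg C) (x : E) (t : ℝ) (ht : 0 ≤ t) :
    HasDerivWithinAt (fun t : ℝ => C t.toNNReal (RR h x)) (C t.toNNReal (RR h x - x))
      (Set.Ici t) t := by
  have h0 := RR_deriv0 h x
  have hs : HasDerivWithinAt (fun s : ℝ => s - t) 1 (Set.Ici t) t :=
    ((hasDerivAt_id t).sub_const t).hasDerivWithinAt
  have h1 : HasDerivWithinAt (fun s : ℝ => C (s - t).toNNReal (RR h x)) ((1:ℝ) • (RR h x - x))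
      (Set.Ici t) t := by
    refine HasDerivWithinAt.scomp (h := fun s : ℝ => s - t)
      (g₁ := fun t : ℝ => C t.toNNReal (RR h x)) (t' := Set.Ici 0) t ?_ hs ?_
    · simpa using h0
    · intro s hs; simpa using hs
  have h2 := ((C t.toNNReal).restrictScalars ℝ).hasFDerivAt.comp_hasDerivWithinAt t h1
  simp only [one_smul, coe_restrictScalars'] at h2
  refine h2.congr_of_mem (fun s hs => ?_) (by simp)
  have : s.toNNReal = t.toNNReal + (s - t).toNNReal := by
    rw [← Real.toNNReal_add ht (by simpa using hs)]; congr 1; ring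
  simp [this, h.add]

theorem RR_comm {C : ℝ≥0 → E →L[ℂ] E} (h : CSg C) (x : E) (t : ℝ≥0) :
    C t (RR h x) = RR h (C t x) := by
  have e1 : C t (RR h x) = ∫ s in Set.Ioi (0:ℝ), C t (orb C x s) :=
    (ContinuousLinearMap.integral_comp_comm _ (orb_int h x)).symm
  rw [e1]
  show _ = ∫ s in Set.Ioi (0:ℝ), orb C (C t x) s
  congr 1; ext s
  simp only [orb]
  rw [ContinuousLinearMap.map_smul_of_tower]
  congr 1
  have := h.add t s.toNNReal
  rw [add_comm, h.add] at this
  exact (congrArg (fun A => A x) this).symm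

theorem RR_iso {V : ℝ≥0 → E →L[ℂ] E} (h : CSg V) (hi : ∀ t x, ‖V t x‖ = ‖x‖) (x : E) :
    ‖x - (2:ℂ) • RR h x‖ = ‖x‖ := by
  let _ : InnerProductSpace ℝ E := InnerProductSpace.complexToReal
  have h1 := HasDerivWithinAt.norm_sq (F := E) (RR_deriv0 h x)
  simp only [hi] at h1
  have h2 := (hasDerivWithinAt_const (0:ℝ) (Set.Ici (0:ℝ)) (‖RR h x‖ ^ 2))
  have h3 := (uniqueDiffOn_Ici (0:ℝ) 0 (by simp)).eq_deriv _ h1 h2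
  simp only [Real.toNNReal_zero, h.zero, one_apply_eq_self] at h3
  have h4 : ‖x - (2:ℝ) • RR h x‖ ^ 2 = ‖x‖ ^ 2 := by
    rw [norm_sub_sq_real]
    rw [inner_sub_right, real_inner_self_eq_norm_sq, real_inner_comm] at h3
    rw [real_inner_smul_right, norm_smul]
    norm_num
    nlinarith
  have h5 : (2:ℂ) • RR h x = (2:ℝ) • RR h x := by
    rw [← Complex.coe_smul]; norm_num
  rw [h5]
  exact (sq_eq_sq₀ (norm_nonneg _) (norm_nonneg _)).1 h4


def TT {V : ℝ≥0 → E →L[ℂ] E} (h : CSg V) (hi : ∀ t x, ‖V t x‖ = ‖x‖) : E →ₗᵢ[ℂ] E where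
  toLinearMap := LinearMap.id - (2:ℂ) • RR h
  norm_map' x := by simpa using RR_iso h hi x

theorem RR_adj {V : ℝ≥0 → E →L[ℂ] E} (h : CSg V) (hC : CSg (fun t => adjoint (V t))) (x y : E) :
    ⟪RR hC x, y⟫_ℂ = ⟪x, RR h y⟫_ℂ := by
  have e1 : ⟪RR hC x, y⟫_ℂ = ∫ s in Set.Ioi (0:ℝ), ⟪orb (fun t => adjoint (V t)) x s, y⟫_ℂ := by
    rw [← inner_conj_symm]
    have := integral_inner (𝕜 := ℂ) (orb_int hC x) y
    show (starRingEnd ℂ) ⟪y, ∫ s in Set.Ioi (0:ℝ), orb (fun t => adjoint (V t)) x s⟫_ℂ = _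
    rw [← this, ← integral_conj]
    congr 1; ext s; exact inner_conj_symm _ _
  have e2 := integral_inner (𝕜 := ℂ) (orb_int h y) x
  rw [e1]
  show _ = ⟪x, ∫ s in Set.Ioi (0:ℝ), orb V y s⟫_ℂ
  rw [← e2]
  congr 1; ext s
  simp only [orb]
  rw [← Complex.coe_smul, ← Complex.coe_smul, inner_smul_left, inner_smul_right,
    adjoint_inner_left, Complex.conj_ofReal]

def NN (V : ℝ≥0 → E →L[ℂ] E) : Submodule ℂ E where
  carrier := {x | ∀ t : ℝ≥0, adjoint (V t) x = ((Real.exp (-(t:ℝ)) : ℝ) : ℂ) • x}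
  add_mem' := by
    intro a b ha hb t
    rw [map_add, ha t, hb t, smul_add]
  zero_mem' := by intro t; simp
  smul_mem' := by
    intro c x hx t
    rw [map_smul, hx t, smul_comm]

theorem mem_NN_of_RR {V : ℝ≥0 → E →L[ℂ] E} (hC : CSg (fun t => adjoint (V t))) (z : E)
    (hz : z = (2:ℂ) • RR hC z) : z ∈ NN V := by
  intro t
  have hz' : z = (2:ℝ) • RR hC z := by
    conv_lhs => rw [hz]
    rw [← Complex.coe_smul]; norm_num
  have key : ∀ s : ℝ, 0 ≤ s → HasDerivWithinAt
      (fun s : ℝ => Real.exp s • adjoint (V s.toNNReal) (RR hC z)) 0 (Set.Ici s) s := by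
    intro s hs
    have h1 := (Real.hasDerivAt_exp s).hasDerivWithinAt.smul (RR_deriv hC z s hs)
    refine h1.congr_deriv ?_
    have : RR hC z - z = - RR hC z := by
      have h6 : RR hC z - z = RR hC z - (2:ℝ) • RR hC z := congrArg (RR hC z - ·) hz'
      rw [h6, two_smul]; abel
    rw [this]; simp
  have hcont : ContinuousOn (fun s : ℝ => Real.exp s • adjoint (V s.toNNReal) (RR hC z))
      (Set.Icc 0 (t:ℝ)) :=
    (Real.continuous_exp.smul ((hC.cont _).comp continuous_real_toNNReal)).continuousOn
  have h2 := constant_of_has_deriv_right_zero hcont (fun s hs => key s hs.1) t (by simp)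
  simp only [Real.toNNReal_coe, Real.exp_zero, one_smul, Real.toNNReal_zero] at h2
  have h0 : adjoint (V 0) (RR hC z) = RR hC z := by
    have := hC.zero
    rw [this]; rfl
  rw [h0] at h2
  have h3 : adjoint (V t) (RR hC z) = Real.exp (-(t:ℝ)) • RR hC z := by
    conv_rhs => rw [← h2, smul_smul, ← Real.exp_add]
    simp
  rw [Complex.coe_smul]
  have h7 : adjoint (V t) z = (2:ℝ) • adjoint (V t) (RR hC z) := by
    rw [← ContinuousLinearMap.map_smul_of_tower]; exact congrArg _ hz'
  rw [h7, h3, smul_comm, ← hz']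

theorem wold {V : ℝ≥0 → E →L[ℂ] E} (h : CSg V) (hi : ∀ t x, ‖V t x‖ = ‖x‖)
    (hC : CSg (fun t => adjoint (V t))) (x : E)
    (hx : ∀ t, ∀ n ∈ NN V, ⟪x, V t n⟫_ℂ = 0) (t : ℝ≥0) : V t (adjoint (V t) x) = x := by
  let _ : InnerProductSpace ℝ E := InnerProductSpace.complexToReal
  have hadj : ∀ a b : E, ⟪a - (2:ℂ) • RR hC a, b⟫_ℂ = ⟪a, TT h hi b⟫_ℂ := by
    intro a b
    show _ = ⟪a, b - (2:ℂ) • RR h b⟫_ℂ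
    rw [inner_sub_left, inner_sub_right, inner_smul_left, inner_smul_right, RR_adj h hC, Complex.conj_ofNat]
  have hNN : ∀ a : E, a - TT h hi (a - (2:ℂ) • RR hC a) ∈ NN V := by
    intro a
    apply mem_NN_of_RR hC
    rw [← sub_eq_zero]
    apply ext_inner_right ℂ
    intro b
    rw [hadj, inner_sub_left, LinearIsometry.inner_map_map, hadj, inner_zero_left, sub_self]
  have hnorm : ∀ s : ℝ≥0, ‖adjoint (V s) x - (2:ℂ) • RR hC (adjoint (V s) x)‖
      = ‖adjoint (V s) x‖ := by
    intro s
    have h1 := hx s _ (hNN (adjoint (V s) x))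
    rw [← adjoint_inner_left, inner_sub_right, ← hadj, inner_self_eq_norm_sq_to_K,
      inner_self_eq_norm_sq_to_K, sub_eq_zero] at h1
    have h2 : ‖adjoint (V s) x‖ ^ 2 = ‖adjoint (V s) x - (2:ℂ) • RR hC (adjoint (V s) x)‖ ^ 2 := by
      exact_mod_cast h1
    exact ((sq_eq_sq₀ (norm_nonneg _) (norm_nonneg _)).1 h2).symm
  have hre : ∀ y : E, ‖y - (2:ℂ) • RR hC y‖ = ‖y‖ → ⟪RR hC y, RR hC y - y⟫_ℝ = 0 := by
    intro y hy
    have h5 : (2:ℂ) • RR hC y = (2:ℝ) • RR hC y := by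
      rw [← Complex.coe_smul]; norm_num
    have h4 : ‖y - (2:ℝ) • RR hC y‖ ^ 2 = ‖y‖ ^ 2 := by rw [← h5, hy]
    rw [norm_sub_sq_real, real_inner_smul_right, norm_smul] at h4
    norm_num at h4
    rw [inner_sub_right, real_inner_self_eq_norm_sq, real_inner_comm]
    nlinarith
  set w := RR hC x with hw
  have hconst : ∀ s : ℝ≥0, ‖adjoint (V s) w‖ = ‖w‖ := by
    intro s
    have hcont : ContinuousOn (fun r : ℝ => ‖adjoint (V r.toNNReal) w‖ ^ 2) (Set.Icc 0 (s:ℝ)) :=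
      (((hC.cont w).comp continuous_real_toNNReal).norm.pow 2).continuousOn
    have := constant_of_has_deriv_right_zero hcont (fun r hr => by
      have h1 := HasDerivWithinAt.norm_sq (F := E) (RR_deriv hC x r hr.1)
      refine h1.congr_deriv ?_
      have h2 := hre _ (hnorm r.toNNReal)
      have h3 := RR_comm hC x r.toNNReal
      rw [map_sub, h3, h2, mul_zero]) s (by simp)
    have h0 : adjoint (V 0) w = w := by
      have := hC.zero
      rw [this]; rfl
    simp only [Real.toNNReal_coe, Real.toNNReal_zero, h0] at this
    exact (sq_eq_sq₀ (norm_nonneg _) (norm_nonneg _)).1 this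
  have hVV : ∀ s y, adjoint (V s) (V s y) = y := by
    intro s y
    apply ext_inner_right ℂ
    intro b
    rw [adjoint_inner_left]
    exact (LinearMap.isometryOfInner (V s).toLinearMap (fun a b => by
      exact (LinearIsometry.mk (V s).toLinearMap (hi s)).inner_map_map a b)).inner_map_map y b
  have hran : ∀ s : ℝ≥0, V s (adjoint (V s) w) = w := by
    intro s
    have h1 : ‖w - V s (adjoint (V s) w)‖ ^ 2 = 0 := by
      rw [@norm_sub_sq ℂ, hi, ← adjoint_inner_left, inner_self_eq_norm_sq, hconst]
      ring
    have := norm_eq_zero.1 (pow_eq_zero_iff (two_ne_zero) |>.1 h1)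
    exact (sub_eq_zero.1 this).symm
  have hran2 : ∀ r : ℝ≥0, V t (adjoint (V t) (adjoint (V r) w)) = adjoint (V r) w := by
    intro r
    have h1 := hran (r + t)
    rw [h.add] at h1
    set u := adjoint (V r ∘L V t) w
    have h2 : adjoint (V r) w = V t u := by
      conv_lhs => rw [← h1]
      simp [hVV]
    rw [h2, hVV]
  have d1 := RR_deriv0 hC x
  have d2 := ((V t ∘L adjoint (V t)).restrictScalars ℝ).hasFDerivAt.comp_hasDerivWithinAt 0 d1
  have d3 := (uniqueDiffOn_Ici (0:ℝ) 0 (by simp)).eq_deriv _ d1 (d2.congr_of_mem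
    (fun s _ => by simpa using (hran2 s.toNNReal).symm) (by simp))
  simp only [coe_restrictScalars', comp_apply, map_sub] at d3
  rw [← hw, hran t] at d3
  simpa using d3.symm

end Wold

section DCsec
variable {E : Type} [NormedAddCommGroup E] [InnerProductSpace ℂ E] [CompleteSpace E]

structure DC (W1 W2 : ℝ≥0 → E →L[ℂ] E) : Prop where
  h1 : CSg W1
  i1 : ∀ t x, ‖W1 t x‖ = ‖x‖
  c1 : CSg (fun t => adjoint (W1 t))
  h2 : CSg W2
  i2 : ∀ t x, ‖W2 t x‖ = ‖x‖
  c2 : CSg (fun t => adjoint (W2 t))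
  comm : ∀ t s x, W1 t (W2 s x) = W2 s (W1 t x)
  dc : ∀ t s x, W1 t (adjoint (W2 s) x) = adjoint (W2 s) (W1 t x)

variable {W1 W2 : ℝ≥0 → E →L[ℂ] E}

theorem DC.symm (h : DC W1 W2) : DC W2 W1 where
  h1 := h.h2
  i1 := h.i2
  c1 := h.c2
  h2 := h.h1
  i2 := h.i1
  c2 := h.c1
  comm := fun t s x => (h.comm s t x).symm
  dc := fun t s x => by
    apply ext_inner_right ℂ
    intro b
    rw [adjoint_inner_left, ← adjoint_inner_right, adjoint_inner_left, ← adjoint_inner_right,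
      h.dc]

theorem DC.ac (h : DC W1 W2) (t s : ℝ≥0) (x : E) :
    adjoint (W1 t) (adjoint (W2 s) x) = adjoint (W2 s) (adjoint (W1 t) x) := by
  apply ext_inner_right ℂ
  intro b
  rw [adjoint_inner_left, adjoint_inner_left, adjoint_inner_left, adjoint_inner_left, h.comm]

theorem adj_self {V : ℝ≥0 → E →L[ℂ] E} (hi : ∀ t x, ‖V t x‖ = ‖x‖) (s : ℝ≥0) (y : E) :
    adjoint (V s) (V s y) = y := by
  apply ext_inner_right ℂ
  intro b
  rw [adjoint_inner_left]
  exact (LinearIsometry.mk (V s).toLinearMap (hi s)).inner_map_map y b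

def LL (V : ℝ≥0 → E →L[ℂ] E) : Submodule ℂ E where
  carrier := {x | ∀ t : ℝ≥0, V t (adjoint (V t) x) = x}
  add_mem' := by intro a b ha hb t; rw [map_add, map_add, ha t, hb t]
  zero_mem' := by intro t; simp
  smul_mem' := by intro c x hx t; rw [map_smul, map_smul, hx t]

theorem LL_closed (V : ℝ≥0 → E →L[ℂ] E) : IsClosed (LL V : Set E) := by
  have : (LL V : Set E) = ⋂ t : ℝ≥0, {x | V t (adjoint (V t) x) = x} := by
    ext x; simp [LL]
  rw [this]
  exact isClosed_iInter fun t => isClosed_eq (by fun_prop) continuous_id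

theorem NN_closed (V : ℝ≥0 → E →L[ℂ] E) : IsClosed (NN V : Set E) := by
  have : (NN V : Set E) = ⋂ t : ℝ≥0, {x | adjoint (V t) x = ((Real.exp (-(t:ℝ)) : ℝ) : ℂ) • x} := by
    ext x; simp [NN]
  rw [this]
  exact isClosed_iInter fun t => isClosed_eq (by fun_prop) (by fun_prop)

theorem LL_self {V : ℝ≥0 → E →L[ℂ] E} (h : CSg V) (hi : ∀ t x, ‖V t x‖ = ‖x‖) (s : ℝ≥0) {x : E}
    (hx : x ∈ LL V) : V s x ∈ LL V := by
  intro t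
  rcases le_total t s with hts | hts
  · obtain ⟨r, rfl⟩ := exists_add_of_le hts
    simp only [h.add, comp_apply, adj_self hi]
  · obtain ⟨r, rfl⟩ := exists_add_of_le hts
    simp only [h.add, adjoint_comp, comp_apply, adj_self hi, hx r]

theorem LL_adj {V : ℝ≥0 → E →L[ℂ] E} (h : CSg V) (hi : ∀ t x, ‖V t x‖ = ‖x‖) (s : ℝ≥0) {x : E}
    (hx : x ∈ LL V) : adjoint (V s) x ∈ LL V := by
  intro t
  have h1 := hx (s + t)
  simp only [h.add, adjoint_comp, comp_apply] at h1
  have h2 : adjoint (V s) x = V t (adjoint (V t) (adjoint (V s) x)) := by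
    conv_lhs => rw [← h1]
    rw [adj_self hi]
  exact h2.symm

theorem DC.LL_2 (h : DC W1 W2) (s : ℝ≥0) {x : E} (hx : x ∈ LL W1) : W2 s x ∈ LL W1 := by
  intro t
  rw [← h.symm.dc, h.comm, hx t]

theorem DC.LL_2adj (h : DC W1 W2) (s : ℝ≥0) {x : E} (hx : x ∈ LL W1) :
    adjoint (W2 s) x ∈ LL W1 := by
  intro t
  rw [h.ac, h.dc, hx t]

theorem DC.NN_2 (h : DC W1 W2) (s : ℝ≥0) {x : E} (hx : x ∈ NN W1) : W2 s x ∈ NN W1 := by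
  intro t
  rw [← h.symm.dc, hx t, map_smul]

theorem DC.NN_2adj (h : DC W1 W2) (s : ℝ≥0) {x : E} (hx : x ∈ NN W1) :
    adjoint (W2 s) x ∈ NN W1 := by
  intro t
  rw [h.ac, hx t, map_smul]

theorem proj_comm (S : Submodule ℂ E) [S.HasOrthogonalProjection] (A : E →L[ℂ] E)
    (h1 : ∀ x ∈ S, A x ∈ S) (h2 : ∀ x ∈ S, adjoint A x ∈ S) (x : E) :
    S.starProjection (A x) = A (S.starProjection x) := by
  apply Submodule.eq_starProjection_of_mem_orthogonal
  · exact h1 _ (Submodule.starProjection_apply_mem S x)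
  · rw [← map_sub]
    intro y hy
    rw [← adjoint_inner_left]
    exact Submodule.sub_starProjection_mem_orthogonal (K := S) x _ (h2 y hy)

theorem NN_LL (V : ℝ≥0 → E →L[ℂ] E) (hi : ∀ t x, ‖V t x‖ = ‖x‖) {n l : E}
    (hn : n ∈ NN V) (hl : l ∈ LL V) : ⟪n, l⟫_ℂ = 0 := by
  have h1 : ∀ t : ℝ≥0, ‖⟪n, l⟫_ℂ‖ ≤ Real.exp (-(t:ℝ)) * (‖n‖ * ‖l‖) := by
    intro t
    have : ⟪n, l⟫_ℂ = ⟪adjoint (V t) n, adjoint (V t) l⟫_ℂ := by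
      rw [adjoint_inner_left, hl t]
    rw [this, hn t]
    refine (norm_inner_le_norm _ _).trans ?_
    have h3 : ‖adjoint (V t) l‖ = ‖l‖ := by rw [← hi t, hl t]
    rw [h3, norm_smul, Complex.norm_real, Real.norm_eq_abs, Real.abs_exp, mul_assoc]
  have h2 : Filter.Tendsto (fun t : ℝ => Real.exp (-t) * (‖n‖ * ‖l‖)) Filter.atTop (nhds (0 * (‖n‖ * ‖l‖))) :=
    (Real.tendsto_exp_neg_atTop_nhds_zero).mul_const _
  rw [zero_mul] at h2
  have h3 : ‖⟪n, l⟫_ℂ‖ ≤ 0 := ge_of_tendsto h2 (by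
    filter_upwards [Filter.eventually_ge_atTop 0] with t ht
    exact h1 ⟨t, ht⟩)
  exact norm_le_zero_iff.1 h3

def MM (W1 W2 : ℝ≥0 → E →L[ℂ] E) : Submodule ℂ E :=
  (Submodule.span ℂ {x | ∃ (t s : ℝ≥0) (n : E), n ∈ NN W1 ⊓ NN W2 ∧ x = W1 t (W2 s n)}).topologicalClosure

theorem MM_gen (W1 W2 : ℝ≥0 → E →L[ℂ] E) (t s : ℝ≥0) {n : E} (hn : n ∈ NN W1 ⊓ NN W2) :
    W1 t (W2 s n) ∈ MM W1 W2 :=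
  Submodule.le_topologicalClosure _ (Submodule.subset_span ⟨t, s, n, hn, rfl⟩)

theorem closure_map_mem (S : Set E) (A : E →L[ℂ] E) (M : Submodule ℂ E) (hM : IsClosed (M : Set E))
    (h : ∀ x ∈ S, A x ∈ M) : ∀ x ∈ (Submodule.span ℂ S).topologicalClosure, A x ∈ M := by
  have h1 : (Submodule.span ℂ S).topologicalClosure ≤ M.comap A.toLinearMap :=
    Submodule.topologicalClosure_minimal _ (Submodule.span_le.2 h) (hM.preimage A.continuous)
  exact h1

theorem closure_ortho (S : Set E) (y : E) (h : ∀ x ∈ S, ⟪x, y⟫_ℂ = 0) :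
    ∀ x ∈ (Submodule.span ℂ S).topologicalClosure, ⟪x, y⟫_ℂ = 0 := by
  have h1 : (Submodule.span ℂ S).topologicalClosure ≤ (Submodule.span ℂ {y})ᗮ := by
    apply Submodule.topologicalClosure_minimal _ _ (Submodule.isClosed_orthogonal _)
    rw [Submodule.span_le]
    intro x hx
    rw [SetLike.mem_coe, Submodule.mem_orthogonal_singleton_iff_inner_left]
    exact h x hx
  intro x hx
  have := h1 hx
  rwa [Submodule.mem_orthogonal_singleton_iff_inner_left] at this

theorem MM_closed : IsClosed (MM W1 W2 : Set E) := Submodule.isClosed_topologicalClosure _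

theorem DC.MM_symm (h : DC W1 W2) : MM W1 W2 = MM W2 W1 := by
  unfold MM
  congr 2
  ext x
  constructor
  · rintro ⟨t, s, n, hn, rfl⟩
    exact ⟨s, t, n, ⟨hn.2, hn.1⟩, h.comm _ _ _⟩
  · rintro ⟨t, s, n, hn, rfl⟩
    exact ⟨s, t, n, ⟨hn.2, hn.1⟩, (h.comm _ _ _).symm⟩

theorem DC.MM_1 (h : DC W1 W2) (r : ℝ≥0) : ∀ x ∈ MM W1 W2, W1 r x ∈ MM W1 W2 := by
  apply closure_map_mem _ _ _ MM_closed
  rintro x ⟨t, s, n, hn, rfl⟩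
  have := MM_gen W1 W2 (r + t) s hn
  rwa [h.h1.add] at this

theorem DC.MM_1adj (h : DC W1 W2) (r : ℝ≥0) : ∀ x ∈ MM W1 W2, adjoint (W1 r) x ∈ MM W1 W2 := by
  apply closure_map_mem _ _ _ MM_closed
  rintro x ⟨t, s, n, hn, rfl⟩
  rcases le_total r t with hrt | hrt
  · obtain ⟨a, rfl⟩ := exists_add_of_le hrt
    rw [h.h1.add, comp_apply, adj_self h.i1]
    exact MM_gen W1 W2 a s hn
  · obtain ⟨a, rfl⟩ := exists_add_of_le hrt
    rw [h.h1.add, adjoint_comp, comp_apply, adj_self h.i1, ← h.symm.dc, hn.1 a, map_smul]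
    have := MM_gen W1 W2 0 s hn
    rw [h.h1.zero] at this
    exact Submodule.smul_mem _ _ this

theorem DC.MM_LL (h : DC W1 W2) {x l : E} (hx : x ∈ MM W1 W2) (hl : l ∈ LL W1) : ⟪x, l⟫_ℂ = 0 := by
  refine closure_ortho _ l ?_ x hx
  rintro x ⟨t, s, n, hn, rfl⟩
  rw [← adjoint_inner_right, ← adjoint_inner_right]
  exact NN_LL W1 h.i1 hn.1 (h.LL_2adj s (LL_adj h.h1 h.i1 t hl))

theorem DC.LL_LL (h : DC W1 W2) (hb : ∀ x, x ∈ LL W1 → x ∈ LL W2 → x = 0) {x y : E}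
    (hx : x ∈ LL W1) (hy : y ∈ LL W2) : ⟪x, y⟫_ℂ = 0 := by
  have : CompleteSpace (LL W1) := (LL_closed W1).completeSpace_coe
  have h1 : (LL W1).starProjection y ∈ LL W2 := by
    intro t
    have h3 : ∀ x ∈ LL W1, adjoint (adjoint (W2 t)) x ∈ LL W1 := by
      intro x hx; rw [adjoint_adjoint]; exact h.LL_2 t hx
    rw [← proj_comm (LL W1) (adjoint (W2 t)) (fun x hx => h.LL_2adj t hx) h3,
      ← proj_comm (LL W1) (W2 t) (fun x hx => h.LL_2 t hx) (fun x hx => h.LL_2adj t hx), hy t]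
  have h2 := hb _ (Submodule.starProjection_apply_mem _ y) h1
  have h3 := Submodule.sub_starProjection_mem_orthogonal (K := LL W1) y x hx
  rwa [h2, sub_zero] at h3

theorem DC.complete (h : DC W1 W2) {x : E} (h0 : ∀ y ∈ MM W1 W2, ⟪x, y⟫_ℂ = 0)
    (h1 : ∀ y ∈ LL W1, ⟪x, y⟫_ℂ = 0) (h2 : ∀ y ∈ LL W2, ⟪x, y⟫_ℂ = 0) : x = 0 := by
  have : CompleteSpace (NN W1) := (NN_closed W1).completeSpace_coe
  have pc : ∀ s y, (NN W1).starProjection (W2 s y) = W2 s ((NN W1).starProjection y) := fun s y =>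
    proj_comm (NN W1) (W2 s) (fun x hx => h.NN_2 s hx) (fun x hx => h.NN_2adj s hx) y
  have pca : ∀ s y, (NN W1).starProjection (adjoint (W2 s) y) =
      adjoint (W2 s) ((NN W1).starProjection y) := fun s y =>
    proj_comm (NN W1) (adjoint (W2 s)) (fun x hx => h.NN_2adj s hx)
      (fun x hx => by rw [adjoint_adjoint]; exact h.NN_2 s hx) y
  have hx1 : x ∈ LL W1 := by
    refine wold h.h1 h.i1 h.c1 x ?_
    intro t n hn
    set y := (NN W1).starProjection (adjoint (W1 t) x) with hy
    have key : ∀ z, ⟪y, z⟫_ℂ = ⟪x, W1 t ((NN W1).starProjection z)⟫_ℂ := by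
      intro z
      rw [hy, Submodule.inner_starProjection_left_eq_right, adjoint_inner_left]
    have hy2 : y ∈ LL W2 := by
      refine wold h.h2 h.i2 h.c2 y ?_
      intro s m hm
      rw [key, pc]
      apply h0
      apply MM_gen
      refine ⟨Submodule.starProjection_apply_mem _ _, ?_⟩
      intro r
      rw [← pca, hm r, map_smul]
    have hy0 : y = 0 := by
      rw [← inner_self_eq_zero (𝕜 := ℂ), key]
      apply h2
      apply h.symm.LL_2
      intro r
      rw [← pca, ← pc, hy2 r]
    have h3 := key n
    rw [hy0, inner_zero_left, Submodule.starProjection_eq_self_iff.2 hn] at h3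
    exact h3.symm
  exact inner_self_eq_zero.1 (h1 x hx1)

end DCsec

section Model
variable {F : Type} [NormedAddCommGroup F] [InnerProductSpace ℂ F] [CompleteSpace F]

theorem QQ_eq : QQ = Set.Ici (0:ℝ) ×ˢ Set.Ici (0:ℝ) := by
  ext p; exact Iff.rfl

theorem nuQ_eq : nuQ = (volume.restrict (Set.Ici (0:ℝ))).prod (volume.restrict (Set.Ici (0:ℝ))) := by
  rw [nuQ, QQ_eq, Measure.prod_restrict]; rfl

theorem QQ_meas : MeasurableSet QQ := by
  rw [QQ_eq]; exact measurableSet_Ici.prod measurableSet_Ici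

theorem ae_QQ : ∀ᵐ p ∂nuQ, 0 ≤ p.1 ∧ 0 ≤ p.2 := by
  unfold nuQ
  exact ae_restrict_mem QQ_meas

def ph (a : ℝ) (x : ℝ) : ℝ := if a ≤ x then √2 * Real.exp (-(x - a)) else 0

theorem ph_meas (a : ℝ) : Measurable (ph a) := by
  unfold ph
  exact Measurable.ite measurableSet_Ici (by fun_prop) measurable_const

theorem ph_mul (a b : ℝ) : (fun x => ph a x * ph b x) =
    (Set.Ici (max a b)).indicator (fun x => (2 * Real.exp (a + b)) * Real.exp ((-2) * x)) := by
  ext x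
  simp only [ph, Set.indicator, Set.mem_Ici, max_le_iff]
  have h2 : √2 * √2 = 2 := Real.mul_self_sqrt (by norm_num)
  by_cases h1 : a ≤ x <;> by_cases h3 : b ≤ x <;> simp [h1, h3]
  have : √2 * Real.exp (a - x) * (√2 * Real.exp (b - x)) = (√2 * √2) * (Real.exp (a - x) * Real.exp (b - x)) := by
    ring
  rw [this, h2, ← Real.exp_add, mul_assoc, ← Real.exp_add]
  congr 2; ring

theorem ph_int (a b : ℝ) : Integrable (fun x => ph a x * ph b x) (volume.restrict (Set.Ici (0:ℝ))) := by
  rw [ph_mul]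
  apply Integrable.restrict
  rw [integrable_indicator_iff measurableSet_Ici, integrableOn_Ici_iff_integrableOn_Ioi]
  exact (integrableOn_exp_mul_Ioi (by norm_num) _).const_mul _

theorem ph_val (a b : ℝ) (ha : 0 ≤ a) :
    ∫ x, ph a x * ph b x ∂(volume.restrict (Set.Ici (0:ℝ))) = Real.exp (-|a - b|) := by
  rw [ph_mul, setIntegral_indicator measurableSet_Ici]
  have : Set.Ici (0:ℝ) ∩ Set.Ici (max a b) = Set.Ici (max a b) := by
    apply Set.inter_eq_right.2
    exact Set.Ici_subset_Ici.2 (le_max_of_le_left ha)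
  rw [this, integral_Ici_eq_integral_Ioi, integral_const_mul, integral_exp_mul_Ioi (by norm_num)]
  have : 2 * Real.exp (a + b) * (-Real.exp (-2 * max a b) / -2) = Real.exp (a + b) * Real.exp (-2 * max a b) := by
    ring
  rw [this, ← Real.exp_add]
  congr 1
  rcases le_total a b with h | h
  · rw [max_eq_right h, abs_of_nonpos (by linarith)]; ring
  · rw [max_eq_left h, abs_of_nonneg (by linarith)]; ring

def Bf (a b : ℝ) (n : F) (p : ℝ × ℝ) : F := ((ph a p.1 * ph b p.2 : ℝ) : ℂ) • n

theorem Bf_sm (a b : ℝ) (n : F) : StronglyMeasurable (Bf a b n) := by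
  unfold Bf
  apply StronglyMeasurable.smul_const
  apply Measurable.stronglyMeasurable
  have h1 : Measurable fun p : ℝ × ℝ => ph a p.1 := (ph_meas a).comp measurable_fst
  have h2 : Measurable fun p : ℝ × ℝ => ph b p.2 := (ph_meas b).comp measurable_snd
  exact Complex.measurable_ofReal.comp (h1.mul h2)

theorem pp_int (a b a' b' : ℝ) :
    Integrable (fun p : ℝ × ℝ => (ph a p.1 * ph a' p.1) * (ph b p.2 * ph b' p.2)) nuQ := by
  rw [nuQ_eq]
  exact (ph_int a a').mul_prod (ph_int b b')

theorem Bf_memLp (a b : ℝ) (n : F) : MemLp (Bf a b n) 2 nuQ := by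
  rw [memLp_two_iff_integrable_sq_norm (Bf_sm a b n).aestronglyMeasurable]
  have := (pp_int a b a b).mul_const (‖n‖ ^ 2)
  refine this.congr (Filter.Eventually.of_forall fun p => ?_)
  simp only [Bf, norm_smul, Complex.norm_real, mul_pow, Real.norm_eq_abs, sq_abs]
  ring

def BB (a b : ℝ) : F →ₗ[ℂ] Lp F 2 nuQ where
  toFun n := (Bf_memLp a b n).toLp
  map_add' n m := by
    rw [← MemLp.toLp_add]
    congr 1; ext p; simp [Bf]
  map_smul' c n := by
    rw [RingHom.id_apply, ← MemLp.toLp_const_smul]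
    congr 1; ext p; simp only [Bf, Pi.smul_apply]; rw [smul_comm]

theorem BB_coe (a b : ℝ) (n : F) : (BB a b n : ℝ × ℝ → F) =ᵐ[nuQ] Bf a b n :=
  (Bf_memLp a b n).coeFn_toLp

theorem BB_inner (a b a' b' : ℝ) (ha : 0 ≤ a) (hb : 0 ≤ b) (n m : F) :
    ⟪BB a b n, BB a' b' m⟫_ℂ = ((Real.exp (-|a - a'|) * Real.exp (-|b - b'|) : ℝ) : ℂ) * ⟪n, m⟫_ℂ := by
  rw [L2.inner_def]
  have h1 : (fun p => ⟪(BB a b n : ℝ × ℝ → F) p, (BB a' b' m : ℝ × ℝ → F) p⟫_ℂ) =ᵐ[nuQ]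
      fun p => (((ph a p.1 * ph a' p.1) * (ph b p.2 * ph b' p.2) : ℝ) : ℂ) * ⟪n, m⟫_ℂ := by
    filter_upwards [BB_coe a b n, BB_coe a' b' m] with p h1 h2
    rw [h1, h2, Bf, Bf, inner_smul_left, inner_smul_right, Complex.conj_ofReal]
    push_cast; ring
  rw [integral_congr_ae h1, integral_mul_const, integral_complex_ofReal, nuQ_eq]
  congr 2
  rw [integral_prod_mul (fun x => ph a x * ph a' x) (fun x => ph b x * ph b' x), ph_val a a' ha, ph_val b b' hb]

theorem inner_BB (g : Lp F 2 nuQ) (a b : ℝ) (n : F) :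
    ⟪g, BB a b n⟫_ℂ = ∫ p, ⟪(g : ℝ × ℝ → F) p, Bf a b n p⟫_ℂ ∂nuQ := by
  rw [L2.inner_def]
  apply integral_congr_ae
  filter_upwards [BB_coe a b n] with p h1
  rw [h1]

theorem shift_int (t s : ℝ) (k : ℝ × ℝ → ℂ) :
    ∫ p, (if t ≤ p.1 ∧ s ≤ p.2 then k (p.1 - t, p.2 - s) else 0) ∂(volume : Measure (ℝ × ℝ))
      = ∫ p, k p ∂nuQ := by
  have h1 : (fun p : ℝ × ℝ => if t ≤ p.1 ∧ s ≤ p.2 then k (p.1 - t, p.2 - s) else 0)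
      = fun p => (QQ.indicator k) (p - (t, s)) := by
    ext p
    simp [Set.indicator, QQ, Prod.fst_sub, Prod.snd_sub]
    rfl
  rw [h1, integral_sub_right_eq_self (μ := volume) (QQ.indicator k) (t, s),
    integral_indicator QQ_meas]
  rfl

theorem shift_intQ (t s : ℝ) (ht : 0 ≤ t) (hs : 0 ≤ s) (k : ℝ × ℝ → ℂ) :
    ∫ p, (if t ≤ p.1 ∧ s ≤ p.2 then k (p.1 - t, p.2 - s) else 0) ∂nuQ = ∫ p, k p ∂nuQ := by
  rw [← shift_int t s k]
  unfold nuQ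
  rw [← integral_indicator QQ_meas]
  congr 1; ext p
  by_cases h : t ≤ p.1 ∧ s ≤ p.2
  · rw [Set.indicator_of_mem]
    exact ⟨ht.trans h.1, hs.trans h.2⟩
  · rw [if_neg h]
    simp only [Set.indicator]
    split_ifs <;> rfl

theorem ph_shift (a t : ℝ≥0) (x : ℝ) (hx : 0 ≤ x) :
    ph a (x + t) = Real.exp (-((t - a : ℝ≥0) : ℝ)) * ph ((a - t : ℝ≥0) : ℝ) x := by
  rcases le_total a t with h | h
  · obtain ⟨r, rfl⟩ := exists_add_of_le h
    have h1 : (a : ℝ) ≤ x + ((a + r : ℝ≥0) : ℝ) := by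
      push_cast; have := r.2; simp only [NNReal.val_eq_coe] at this; linarith
    rw [ph, if_pos h1, add_tsub_cancel_left, tsub_eq_zero_of_le h, NNReal.coe_zero, ph, if_pos hx]
    rw [mul_left_comm, ← Real.exp_add]
    congr 2; push_cast; ring
  · obtain ⟨r, rfl⟩ := exists_add_of_le h
    rw [tsub_eq_zero_of_le h, add_tsub_cancel_left, NNReal.coe_zero, neg_zero, Real.exp_zero, one_mul,
      ph, ph]
    have : ((t + r : ℝ≥0) : ℝ) ≤ x + t ↔ (r : ℝ) ≤ x := by push_cast; constructor <;> intro h <;> linarith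
    simp only [this]
    split_ifs
    · congr 2; push_cast; ring
    · rfl

theorem shift_BB (f g : Lp F 2 nuQ) (t s : ℝ≥0)
    (hg : (g : ℝ × ℝ → F) =ᵐ[nuQ] fun p => if (t:ℝ) ≤ p.1 ∧ (s:ℝ) ≤ p.2 then
      (f : ℝ × ℝ → F) (p.1 - t, p.2 - s) else 0) (a b : ℝ≥0) (n : F) :
    ⟪g, BB a b n⟫_ℂ = ((Real.exp (-((t - a : ℝ≥0) : ℝ)) * Real.exp (-((s - b : ℝ≥0) : ℝ)) : ℝ) : ℂ) *
      ⟪f, BB ((a - t : ℝ≥0) : ℝ) ((b - s : ℝ≥0) : ℝ) n⟫_ℂ := by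
  rw [inner_BB, inner_BB]
  have h1 : (fun p => ⟪(g : ℝ × ℝ → F) p, Bf a b n p⟫_ℂ) =ᵐ[nuQ] fun p =>
      if (t:ℝ) ≤ p.1 ∧ (s:ℝ) ≤ p.2 then
        (fun q : ℝ × ℝ => ⟪(f : ℝ × ℝ → F) q, Bf a b n (q.1 + t, q.2 + s)⟫_ℂ) (p.1 - t, p.2 - s) else 0 := by
    filter_upwards [hg] with p hp
    rw [hp]
    split_ifs
    · simp
    · simp
  refine (integral_congr_ae h1).trans ((shift_intQ t s t.2 s.2
    (fun q : ℝ × ℝ => ⟪(f : ℝ × ℝ → F) q, Bf a b n (q.1 + t, q.2 + s)⟫_ℂ)).trans ?_)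
  rw [← integral_const_mul]
  apply integral_congr_ae
  filter_upwards [ae_QQ] with p hp
  simp only [Bf]
  rw [ph_shift a t p.1 hp.1, ph_shift b s p.2 hp.2, inner_smul_right, inner_smul_right]
  push_cast; ring

theorem ph_ind (a x : ℝ) (ha : 0 ≤ a) :
    (Set.Ici a).indicator (ph 0) x = Real.exp (-a) * ph a x := by
  simp only [Set.indicator, Set.mem_Ici, ph]
  split_ifs with h1 h2
  · rw [mul_left_comm, ← Real.exp_add]; congr 2; ring
  · exact absurd (ha.trans h1) h2
  · simp

theorem BB_total (g : Lp F 2 nuQ) (h : ∀ (a b : ℝ≥0) (n : F), ⟪BB (a:ℝ) (b:ℝ) n, g⟫_ℂ = 0) : g = 0 := by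
  set k : ℝ × ℝ → F := fun p => ((ph 0 p.1 * ph 0 p.2 : ℝ) : ℂ) • (g : ℝ × ℝ → F) p with hk
  have hki : Integrable k nuQ := by
    have h1 : MemLp (fun p : ℝ × ℝ => ((ph 0 p.1 * ph 0 p.2 : ℝ) : ℂ)) 2 nuQ := by
      have := Bf_memLp (F := ℂ) 0 0 1
      unfold Bf at this
      simpa using this
    exact memLp_one_iff_integrable.1 ((Lp.memLp g).smul h1)
  have hbase : ∀ a b : ℝ, 0 ≤ a → 0 ≤ b → ∫ p in Set.Ici a ×ˢ Set.Ici b, k p ∂nuQ = 0 := by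
    intro a b ha hb
    apply ext_inner_left ℂ
    intro n
    rw [← integral_inner hki.integrableOn, ← integral_indicator (measurableSet_Ici.prod measurableSet_Ici),
      inner_zero_right]
    have h1 := h ⟨a, ha⟩ ⟨b, hb⟩ n
    rw [← inner_conj_symm, inner_BB, ← integral_conj] at h1
    have h2 : ∀ p, (Set.Ici a ×ˢ Set.Ici b).indicator (fun p => ⟪n, k p⟫_ℂ) p =
        ((Real.exp (-a) * Real.exp (-b) : ℝ) : ℂ) * (starRingEnd ℂ) ⟪(g : ℝ × ℝ → F) p, Bf a b n p⟫_ℂ := by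
      intro p
      have e1 := ph_ind a p.1 ha
      have e2 := ph_ind b p.2 hb
      rw [inner_conj_symm, Bf, inner_smul_left, Complex.conj_ofReal, ← mul_assoc, ← Complex.ofReal_mul]
      have e3 : Real.exp (-a) * Real.exp (-b) * (ph a p.1 * ph b p.2) =
        (Real.exp (-a) * ph a p.1) * (Real.exp (-b) * ph b p.2) := by ring
      rw [e3, ← e1, ← e2, hk]
      by_cases m1 : p.1 ∈ Set.Ici a
      · by_cases m2 : p.2 ∈ Set.Ici b
        · rw [Set.indicator_of_mem m1, Set.indicator_of_mem m2, Set.indicator_of_mem (Set.mk_mem_prod m1 m2 : p ∈ _),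
            inner_smul_right]
        · rw [Set.indicator_of_notMem m2, Set.indicator_of_notMem (fun hh => m2 hh.2)]; simp
      · rw [Set.indicator_of_notMem m1, Set.indicator_of_notMem (fun hh => m1 hh.1)]; simp
    simp_rw [h2]
    rw [integral_const_mul]
    erw [h1, mul_zero]
  have hbase2 : ∀ a b : ℝ, ∫ p in Set.Ici a ×ˢ Set.Ici b, k p ∂nuQ = 0 := by
    intro a b
    rw [← hbase (max a 0) (max b 0) (le_max_right _ _) (le_max_right _ _)]
    apply setIntegral_congr_set
    filter_upwards [ae_QQ] with p hp
    apply propext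
    show (a ≤ p.1 ∧ b ≤ p.2) ↔ (max a 0 ≤ p.1 ∧ max b 0 ≤ p.2)
    simp [hp.1, hp.2]
  have htot : ∫ p, k p ∂nuQ = 0 := by
    rw [← hbase 0 0 le_rfl le_rfl, ← setIntegral_univ]
    apply setIntegral_congr_set
    filter_upwards [ae_QQ] with p hp
    apply propext
    show True ↔ (0 ≤ p.1 ∧ 0 ≤ p.2)
    simp [hp.1, hp.2]
  have hspan : IsCountablySpanning (Set.range (Set.Ici : ℝ → Set ℝ)) := by
    refine ⟨fun n : ℕ => Set.Ici (-(n:ℝ)), fun n => ⟨_, rfl⟩, ?_⟩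
    ext x
    simp only [Set.mem_iUnion, Set.mem_Ici, Set.mem_univ, iff_true]
    obtain ⟨n, hn⟩ := exists_nat_ge (-x)
    exact ⟨n, by linarith⟩
  have hgen : (inferInstance : MeasurableSpace (ℝ × ℝ)) = MeasurableSpace.generateFrom
      (Set.image2 (fun s t => s ×ˢ t) (Set.range (Set.Ici : ℝ → Set ℝ)) (Set.range (Set.Ici : ℝ → Set ℝ))) := by
    have e := borel_eq_generateFrom_Ici ℝ
    rw [← BorelSpace.measurable_eq (α := ℝ)] at e
    exact (generateFrom_eq_prod e.symm e.symm hspan hspan).symm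
  have hall : ∀ S : Set (ℝ × ℝ), MeasurableSet S → ∫ p in S, k p ∂nuQ = 0 := by
    intro S hS
    induction S, hS using MeasurableSpace.induction_on_inter hgen (isPiSystem_Ici.prod isPiSystem_Ici) with
    | empty => simp
    | basic S hS =>
      obtain ⟨_, ⟨a, rfl⟩, _, ⟨b, rfl⟩, rfl⟩ := hS
      exact hbase2 a b
    | compl S hS ih =>
      have := integral_add_compl hS hki
      rw [ih, htot, zero_add] at this
      exact this
    | iUnion f hd hm ih =>
      have := hasSum_integral_iUnion hm hd (hki.integrableOn (s := ⋃ i, f i))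
      simp only [ih] at this
      exact this.unique hasSum_zero
  have hk0 := hki.ae_eq_zero_of_forall_setIntegral_eq_zero (fun s hs _ => hall s hs)
  rw [Lp.eq_zero_iff_ae_eq_zero]
  filter_upwards [hk0, ae_QQ] with p h1 h2
  simp only [hk, Pi.zero_apply, smul_eq_zero] at h1
  rcases h1 with h1 | h1
  · exfalso
    have h3 : (0:ℝ) < ph 0 p.1 * ph 0 p.2 := by
      rw [ph, ph, if_pos h2.1, if_pos h2.2]; positivity
    exact h3.ne' (by exact_mod_cast h1)
  · exact h1

end Model

section Gram
variable {ι F H1 H2 : Type} [AddCommGroup F] [Module ℂ F]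
  [NormedAddCommGroup H1] [InnerProductSpace ℂ H1] [CompleteSpace H1]
  [NormedAddCommGroup H2] [InnerProductSpace ℂ H2] [CompleteSpace H2]

theorem dense_of_total (A : ι → F →ₗ[ℂ] H1) (hA : ∀ y, (∀ i n, ⟪A i n, y⟫_ℂ = 0) → y = 0) :
    DenseRange (Finsupp.lsum ℂ A : (ι →₀ F) →ₗ[ℂ] H1) := by
  have h1 : (LinearMap.range (Finsupp.lsum ℂ A : (ι →₀ F) →ₗ[ℂ] H1)).topologicalClosure = ⊤ := by
    rw [Submodule.topologicalClosure_eq_top_iff, Submodule.eq_bot_iff]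
    intro y hy
    apply hA
    intro i n
    rw [Submodule.mem_orthogonal] at hy
    apply hy
    exact ⟨Finsupp.single i n, by simp⟩
  have := Submodule.dense_iff_topologicalClosure_eq_top.2 h1
  exact this

theorem gram_iso (A : ι → F →ₗ[ℂ] H1) (B : ι → F →ₗ[ℂ] H2)
    (hA : ∀ y, (∀ i n, ⟪A i n, y⟫_ℂ = 0) → y = 0) (hB : ∀ y, (∀ i n, ⟪B i n, y⟫_ℂ = 0) → y = 0)
    (hg : ∀ i j n m, ⟪A i n, A j m⟫_ℂ = ⟪B i n, B j m⟫_ℂ) :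
    ∃ Z : H1 ≃ₗᵢ[ℂ] H2, ∀ i n, Z (A i n) = B i n := by
  set a : (ι →₀ F) →ₗ[ℂ] H1 := Finsupp.lsum ℂ A with ha
  set b : (ι →₀ F) →ₗ[ℂ] H2 := Finsupp.lsum ℂ B with hb
  have hin : ∀ x y, ⟪a x, a y⟫_ℂ = ⟪b x, b y⟫_ℂ := by
    intro x y
    induction x using Finsupp.induction_linear with
    | zero => simp
    | add u v hu hv => rw [map_add, map_add, inner_add_left, inner_add_left, hu, hv]
    | single i n =>
      induction y using Finsupp.induction_linear with
      | zero => simp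
      | add u v hu hv => rw [map_add, map_add, inner_add_right, inner_add_right, hu, hv]
      | single j m => simpa [ha, hb] using hg i j n m
  have hn : ∀ x, ‖b ((LinearEquiv.refl ℂ (ι →₀ F)) x)‖ = ‖a x‖ := by
    intro x
    rw [@norm_eq_sqrt_re_inner ℂ, @norm_eq_sqrt_re_inner ℂ, hin]; rfl
  refine ⟨(LinearEquiv.refl ℂ (ι →₀ F)).extendOfIsometry a b (dense_of_total A hA) (dense_of_total B hB) hn, ?_⟩
  intro i n
  have := (LinearEquiv.refl ℂ (ι →₀ F)).extendOfIsometry_eq a b (dense_of_total A hA) (dense_of_total B hB) hn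
    (Finsupp.single i n)
  simpa [ha, hb] using this
end Gram

section Zcon
variable {E : Type} [NormedAddCommGroup E] [InnerProductSpace ℂ E] [CompleteSpace E]

theorem NN_adj_shift {V : ℝ≥0 → E →L[ℂ] E} (h : CSg V) (hi : ∀ t x, ‖V t x‖ = ‖x‖) (t a : ℝ≥0) {x : E}
    (hx : x ∈ NN V) :
    adjoint (V t) (V a x) = ((Real.exp (-((t - a : ℝ≥0) : ℝ)) : ℝ) : ℂ) • V (a - t) x := by
  rcases le_total a t with hh | hh
  · obtain ⟨r, rfl⟩ := exists_add_of_le hh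
    rw [add_tsub_cancel_left, tsub_eq_zero_of_le hh, h.add, adjoint_comp, comp_apply, adj_self hi, hx r, h.zero]
    rfl
  · obtain ⟨r, rfl⟩ := exists_add_of_le hh
    rw [add_tsub_cancel_left, tsub_eq_zero_of_le hh, h.add, comp_apply, adj_self hi]
    simp

theorem NN_gram {V : ℝ≥0 → E →L[ℂ] E} (h : CSg V) (hi : ∀ t x, ‖V t x‖ = ‖x‖) (t a : ℝ≥0) {x y : E}
    (hx : x ∈ NN V) (hy : y ∈ NN V) :
    ⟪V t x, V a y⟫_ℂ = ((Real.exp (-|(t:ℝ) - a|) : ℝ) : ℂ) * ⟪x, y⟫_ℂ := by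
  rcases le_total a t with hh | hh
  · rw [← adjoint_inner_right, NN_adj_shift h hi t a hy, tsub_eq_zero_of_le hh, h.zero, inner_smul_right,
      NNReal.coe_sub hh, abs_of_nonneg (sub_nonneg.2 (NNReal.coe_le_coe.2 hh))]
    rfl
  · rw [← adjoint_inner_left, NN_adj_shift h hi a t hx, tsub_eq_zero_of_le hh, h.zero, inner_smul_left,
      NNReal.coe_sub hh, abs_of_nonpos (sub_nonpos.2 (NNReal.coe_le_coe.2 hh)), Complex.conj_ofReal, neg_sub, neg_neg]
    rfl

variable {W1 W2 : ℝ≥0 → E →L[ℂ] E}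

theorem DC.exists_Z (h : DC W1 W2) :
    ∃ (F : Type) (_ : NormedAddCommGroup F) (_ : InnerProductSpace ℂ F) (_ : CompleteSpace F)
      (Z : ↥(MM W1 W2) ≃ₗᵢ[ℂ] Lp F 2 nuQ), ∀ (t s : ℝ≥0) (f g : Lp F 2 nuQ),
      ((g : ℝ × ℝ → F) =ᵐ[nuQ] fun p => if (t:ℝ) ≤ p.1 ∧ (s:ℝ) ≤ p.2 then
        (f : ℝ × ℝ → F) (p.1 - t, p.2 - s) else 0) →
      W1 t (W2 s (Z.symm f : E)) = (Z.symm g : E) := by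
  have cF : CompleteSpace ↥(NN W1 ⊓ NN W2) :=
    ((NN_closed W1).inter (NN_closed W2)).completeSpace_coe
  have cM : CompleteSpace ↥(MM W1 W2) := (MM_closed (W1 := W1) (W2 := W2)).completeSpace_coe
  let A : ℝ≥0 × ℝ≥0 → ↥(NN W1 ⊓ NN W2) →ₗ[ℂ] ↥(MM W1 W2) := fun i =>
    ((W1 i.1 ∘L W2 i.2).toLinearMap ∘ₗ (NN W1 ⊓ NN W2).subtype).codRestrict (MM W1 W2)
      (fun n => MM_gen W1 W2 i.1 i.2 n.2)
  have Ac : ∀ i n, (A i n : E) = W1 i.1 (W2 i.2 (n : E)) := fun i n => rfl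
  let B : ℝ≥0 × ℝ≥0 → ↥(NN W1 ⊓ NN W2) →ₗ[ℂ] Lp ↥(NN W1 ⊓ NN W2) 2 nuQ := fun i => BB i.1 i.2
  have hA : ∀ y, (∀ i n, ⟪A i n, y⟫_ℂ = 0) → y = 0 := by
    intro y hy
    have h1 := closure_ortho {x | ∃ (t s : ℝ≥0) (n : E), n ∈ NN W1 ⊓ NN W2 ∧ x = W1 t (W2 s n)} (y : E) ?_ y y.2
    · exact Subtype.ext (inner_self_eq_zero.1 h1)
    · rintro x ⟨t, s, n, hn, rfl⟩
      exact hy (t, s) ⟨n, hn⟩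
  have hB : ∀ y, (∀ i n, ⟪B i n, y⟫_ℂ = 0) → y = 0 := by
    intro y hy
    exact BB_total y fun a b n => hy (a, b) n
  have hg : ∀ i j n m, ⟪A i n, A j m⟫_ℂ = ⟪B i n, B j m⟫_ℂ := by
    intro i j n m
    show _ = ⟪BB (i.1:ℝ) (i.2:ℝ) n, BB (j.1:ℝ) (j.2:ℝ) m⟫_ℂ
    rw [BB_inner (i.1:ℝ) (i.2:ℝ) (j.1:ℝ) (j.2:ℝ) i.1.2 i.2.2 n m, Submodule.coe_inner, Ac, Ac,
      NN_gram h.h1 h.i1 _ _ (h.NN_2 _ n.2.1) (h.NN_2 _ m.2.1), NN_gram h.h2 h.i2 _ _ n.2.2 m.2.2]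
    rw [Submodule.coe_inner]; push_cast; ring
  obtain ⟨Z, hZ⟩ := gram_iso A B hA hB hg
  have key : ∀ f i (n : ↥(NN W1 ⊓ NN W2)), ⟪(Z.symm f : E), W1 i.1 (W2 i.2 (n : E))⟫_ℂ = ⟪f, B i n⟫_ℂ := by
    intro f i n
    rw [← hZ, ← Z.symm.inner_map_map, Z.symm_apply_apply]
    rfl
  refine ⟨↥(NN W1 ⊓ NN W2), inferInstance, inferInstance, cF, Z, ?_⟩
  intro t s f g hfg
  have hmem : W1 t (W2 s (Z.symm f : E)) ∈ MM W1 W2 := by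
    apply h.MM_1
    exact h.MM_symm.ge (h.symm.MM_1 s _ (h.MM_symm.le (Z.symm f).2))
  have h0 : (⟨_, hmem⟩ : ↥(MM W1 W2)) - Z.symm g = 0 := by
    apply hA
    intro i n
    rw [Submodule.coe_inner, Ac, Submodule.coe_sub, inner_sub_right, sub_eq_zero]
    rw [← inner_conj_symm, ← inner_conj_symm _ (Z.symm g : E)]
    congr 1
    rw [key]
    show _ = ⟪g, BB (i.1:ℝ) (i.2:ℝ) n⟫_ℂ
    rw [shift_BB f g t s hfg]
    show ⟪W1 t (W2 s (Z.symm f : E)), _⟫_ℂ = _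
    rw [← adjoint_inner_right, ← adjoint_inner_right, NN_adj_shift h.h1 h.i1 t i.1 (h.NN_2 _ n.2.1), map_smul,
      ← h.dc, NN_adj_shift h.h2 h.i2 s i.2 n.2.2, map_smul, inner_smul_right, inner_smul_right]
    have k1 := key f (i.1 - t, i.2 - s) n
    simp only at k1
    rw [k1, ← mul_assoc, Complex.ofReal_mul]
  have := congrArg (Subtype.val) (sub_eq_zero.1 h0)
  exact this

theorem DC.exists_Z' (h : DC W1 W2) :
    ∃ (F : Type) (_ : NormedAddCommGroup F) (_ : InnerProductSpace ℂ F) (_ : CompleteSpace F)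
      (Z : ↥(MM W1 W2) ≃ₗᵢ[ℂ] Lp F 2 nuQ), ∀ (t : ℝ≥0) (f g : Lp F 2 nuQ),
      (((g : ℝ × ℝ → F) =ᵐ[nuQ]
          fun p => if (t:ℝ) ≤ p.1 then (f : ℝ × ℝ → F) (p.1 - t, p.2) else 0) →
        W1 t (Z.symm f : E) = (Z.symm g : E)) ∧
      (((g : ℝ × ℝ → F) =ᵐ[nuQ]
          fun p => if (t:ℝ) ≤ p.2 then (f : ℝ × ℝ → F) (p.1, p.2 - t) else 0) →
        W2 t (Z.symm f : E) = (Z.symm g : E)) := by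
  obtain ⟨F, i1, i2, i3, Z, hZ⟩ := h.exists_Z
  refine ⟨F, i1, i2, i3, Z, fun t f g => ⟨fun hg => ?_, fun hg => ?_⟩⟩
  · have := hZ t 0 f g ?_
    · rwa [h.h2.zero] at this
    · filter_upwards [hg, ae_QQ] with p h1 h2
      rw [h1]; simp [h2.2]
  · have := hZ 0 t f g ?_
    · rwa [h.h1.zero] at this
    · filter_upwards [hg, ae_QQ] with p h1 h2
      rw [h1]; simp [h2.1]
end Zcon

section Amb
variable {G : Type} [NormedAddCommGroup G] [InnerProductSpace ℂ G] [CompleteSpace G]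

theorem UG_inv {U : ℝ → G →L[ℂ] G} (hU : IsUnitaryGroup U) (t : ℝ) (x : G) : U t (U (-t) x) = x := by
  have := hU.2.1 t (-t)
  rw [add_neg_cancel, hU.1] at this
  exact (congrArg (fun A : G →L[ℂ] G => A x) this).symm

theorem UG_inv' {U : ℝ → G →L[ℂ] G} (hU : IsUnitaryGroup U) (t : ℝ) (x : G) : U (-t) (U t x) = x := by
  have := UG_inv hU (-t) x
  rwa [neg_neg] at this

theorem UG_add {U : ℝ → G →L[ℂ] G} (hU : IsUnitaryGroup U) (s t : ℝ) (x : G) :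
    U (s + t) x = U s (U t x) := by
  rw [hU.2.1]; rfl

theorem UG_zero {U : ℝ → G →L[ℂ] G} (hU : IsUnitaryGroup U) (x : G) : U 0 x = x := by
  rw [hU.1]; rfl

theorem UG_ii {U : ℝ → G →L[ℂ] G} (hU : IsUnitaryGroup U) (t : ℝ) (x y : G) :
    ⟪U t x, U t y⟫_ℂ = ⟪x, y⟫_ℂ :=
  (LinearMap.norm_map_iff_inner_map_map (U t).toLinearMap).1 (hU.2.2.1 t) x y

theorem UG_inner {U : ℝ → G →L[ℂ] G} (hU : IsUnitaryGroup U) (t : ℝ) (x y : G) :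
    ⟪U t x, y⟫_ℂ = ⟪x, U (-t) y⟫_ℂ := by
  rw [← UG_ii hU t x (U (-t) y), UG_inv hU]

theorem UG_inner' {U : ℝ → G →L[ℂ] G} (hU : IsUnitaryGroup U) (t : ℝ) (x y : G) :
    ⟪x, U t y⟫_ℂ = ⟪U (-t) x, y⟫_ℂ := by
  rw [UG_inner hU, neg_neg]

theorem UG_adj {U : ℝ → G →L[ℂ] G} (hU : IsUnitaryGroup U) (t : ℝ) : adjoint (U t) = U (-t) := by
  symm
  rw [ContinuousLinearMap.eq_adjoint_iff]
  intro x y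
  rw [UG_inner hU, neg_neg]

variable (K : Submodule ℂ G) [CompleteSpace ↥K]

def ww (U : ℝ → G →L[ℂ] G) (t : ℝ≥0) : ↥Kᗮ →L[ℂ] ↥Kᗮ :=
  Kᗮ.orthogonalProjectionOnto ∘L U (-(t:ℝ)) ∘L Kᗮ.subtypeL

variable {K}

theorem sub_P_mem (x : G) : x - Kᗮ.starProjection x ∈ K := by
  have := Submodule.sub_starProjection_mem_orthogonal (K := Kᗮ) x
  rwa [Submodule.orthogonal_orthogonal] at this

theorem P_of_mem {x : G} (hx : x ∈ K) : Kᗮ.starProjection x = 0 := by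
  apply Submodule.starProjection_apply_eq_zero_iff _ |>.2
  rwa [Submodule.orthogonal_orthogonal]

theorem P_zero_mem {x : G} (hx : Kᗮ.starProjection x = 0) : x ∈ K := by
  have := sub_P_mem (K := K) x
  rwa [hx, sub_zero] at this

theorem P_self {x : G} (hx : x ∈ Kᗮ) : Kᗮ.starProjection x = x :=
  Submodule.starProjection_eq_self_iff.2 hx

theorem P_mem (x : G) : Kᗮ.starProjection x ∈ Kᗮ := Submodule.starProjection_apply_mem _ _

theorem P_inner (x y : G) : ⟪Kᗮ.starProjection x, y⟫_ℂ = ⟪x, Kᗮ.starProjection y⟫_ℂ :=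
  Submodule.inner_starProjection_left_eq_right _ _ _

theorem DK {d k : G} (hd : d ∈ Kᗮ) (hk : k ∈ K) : ⟪d, k⟫_ℂ = 0 :=
  Submodule.inner_left_of_mem_orthogonal hk hd

theorem D_inv {U : ℝ → G →L[ℂ] G} (hU : IsUnitaryGroup U) (hK : ∀ t : ℝ≥0, ∀ k ∈ K, U t k ∈ K)
    (t : ℝ≥0) {x : G} (hx : x ∈ Kᗮ) : U (-(t:ℝ)) x ∈ Kᗮ := by
  rw [Submodule.mem_orthogonal] at hx ⊢
  intro k hk
  rw [UG_inner' hU, neg_neg]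
  exact hx _ (hK t k hk)

theorem ww_coe {U : ℝ → G →L[ℂ] G} (hU : IsUnitaryGroup U) (hK : ∀ t : ℝ≥0, ∀ k ∈ K, U t k ∈ K)
    (t : ℝ≥0) (x : ↥Kᗮ) : (ww K U t x : G) = U (-(t:ℝ)) x := by
  have := P_self (D_inv hU hK t x.2)
  exact this

theorem ww_adj {U : ℝ → G →L[ℂ] G} (hU : IsUnitaryGroup U)
    (t : ℝ≥0) (x : ↥Kᗮ) : (adjoint (ww K U t) x : G) = Kᗮ.starProjection (U t x) := by
  unfold ww
  rw [adjoint_comp, adjoint_comp, UG_adj hU, neg_neg]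
  have e1 : adjoint (Kᗮ.orthogonalProjectionOnto) = Kᗮ.subtypeL := by
    rw [← Submodule.adjoint_subtypeL, adjoint_adjoint]
  rw [e1, Submodule.adjoint_subtypeL]
  rfl

theorem ww_CSg {U : ℝ → G →L[ℂ] G} (hU : IsUnitaryGroup U) (hK : ∀ t : ℝ≥0, ∀ k ∈ K, U t k ∈ K) :
    CSg (ww K U) where
  zero := by
    ext x
    rw [ww_coe hU hK]; simp [hU.1]
  add s t := by
    ext x
    rw [ww_coe hU hK, comp_apply, ww_coe hU hK, ww_coe hU hK, ← UG_add hU]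
    congr 2; push_cast; ring
  cont x := by
    apply continuous_induced_rng.2
    have h1 : Continuous fun t : ℝ≥0 => U (-(t:ℝ)) (x:G) :=
      (hU.2.2.2.2 (x:G)).comp (by fun_prop)
    convert h1 using 2 with t
    exact ww_coe hU hK t x
  le t x := by
    rw [Submodule.coe_norm, ww_coe hU hK, hU.2.2.1]; rfl

theorem ww_CSg' {U : ℝ → G →L[ℂ] G} (hU : IsUnitaryGroup U) (hK : ∀ t : ℝ≥0, ∀ k ∈ K, U t k ∈ K) :
    CSg (fun t => adjoint (ww K U t)) where
  zero := by
    rw [(ww_CSg hU hK).zero]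
    exact star_one _
  add s t := by
    rw [add_comm, (ww_CSg hU hK).add, adjoint_comp]
  cont x := by
    apply continuous_induced_rng.2
    have h1 : Continuous fun t : ℝ≥0 => Kᗮ.starProjection (U (t:ℝ) (x:G)) :=
      (Kᗮ.starProjection).continuous.comp ((hU.2.2.2.2 (x:G)).comp (by fun_prop))
    convert h1 using 2 with t
    exact ww_adj hU t x
  le t x := by
    rw [Submodule.coe_norm, ww_adj hU]
    refine (Submodule.norm_starProjection_apply_le _ _).trans ?_
    rw [hU.2.2.1]; rfl

theorem ww_iso {U : ℝ → G →L[ℂ] G} (hU : IsUnitaryGroup U) (hK : ∀ t : ℝ≥0, ∀ k ∈ K, U t k ∈ K) (t : ℝ≥0)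
    (x : ↥Kᗮ) : ‖ww K U t x‖ = ‖x‖ := by
  rw [Submodule.coe_norm, ww_coe hU hK, hU.2.2.1]; rfl

variable (K) in
structure Amb (U1 U2 : ℝ → G →L[ℂ] G) : Prop where
  u1 : IsUnitaryGroup U1
  u2 : IsUnitaryGroup U2
  comm : ∀ s t x, U1 s (U2 t x) = U2 t (U1 s x)
  k1 : ∀ t : ℝ≥0, ∀ k ∈ K, U1 t k ∈ K
  k2 : ∀ t : ℝ≥0, ∀ k ∈ K, U2 t k ∈ K
  mini : ∀ y, (∀ t s, ∀ k ∈ K, ⟪U1 t (U2 s k), y⟫_ℂ = 0) → y = 0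
  dc : DC (ww K U1) (ww K U2)

variable {U1 U2 : ℝ → G →L[ℂ] G}

theorem mkAmb {V1 V2 : ℝ≥0 → ↥K →L[ℂ] ↥K} (hext : IsMinimalUnitaryExtension K V1 V2 U1 U2)
    (hddc : DualDoublyCommutes K U1 U2) : Amb K U1 U2 := by
  obtain ⟨u1, u2, hc, hV, hm⟩ := hext
  have comm : ∀ s t x, U1 s (U2 t x) = U2 t (U1 s x) := fun s t x =>
    congrArg (fun A : G →L[ℂ] G => A x) (hc s t)
  have k1 : ∀ t : ℝ≥0, ∀ k ∈ K, U1 t k ∈ K := fun t k hk => by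
    have := (hV t ⟨k, hk⟩).1
    simp only at this
    rw [this]; exact (V1 t ⟨k, hk⟩).2
  have k2 : ∀ t : ℝ≥0, ∀ k ∈ K, U2 t k ∈ K := fun t k hk => by
    have := (hV t ⟨k, hk⟩).2
    simp only at this
    rw [this]; exact (V2 t ⟨k, hk⟩).2
  refine ⟨u1, u2, comm, k1, k2, ?_, ?_⟩
  · intro y hy
    have h1 := closure_ortho {x : G | ∃ (t s : ℝ) (h : ↥K), x = U1 t (U2 s (h : G))} y (by
      rintro x ⟨t, s, k, rfl⟩
      exact hy t s k k.2) y (by rw [hm]; trivial)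
    exact inner_self_eq_zero.1 h1
  · refine ⟨ww_CSg u1 k1, ww_iso u1 k1, ww_CSg' u1 k1, ww_CSg u2 k2, ww_iso u2 k2, ww_CSg' u2 k2, ?_, ?_⟩
    · intro t s x
      ext
      rw [ww_coe u1 k1, ww_coe u2 k2, ww_coe u2 k2, ww_coe u1 k1, comm]
    · intro t s x
      ext
      rw [ww_coe u1 k1, ww_adj u2, ww_adj u2, ww_coe u1 k1, ← UG_adj u1]
      exact (hddc t s t.2 s.2 x x.2).2 _ _ (P_mem _) (sub_P_mem _) (P_mem _) (sub_P_mem _)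

theorem Amb.symm (h : Amb K U1 U2) : Amb K U2 U1 :=
  ⟨h.u2, h.u1, fun s t x => (h.comm t s x).symm, h.k2, h.k1,
    fun y hy => h.mini y fun t s k hk => by rw [h.comm]; exact hy s t k hk, h.dc.symm⟩

variable (K U1 U2) in
structure Red (X : Submodule ℂ G) : Prop where
  closed : IsClosed (X : Set G)
  le : ∀ x ∈ X, x ∈ Kᗮ
  n1 : ∀ t : ℝ≥0, ∀ x ∈ X, U1 (-(t:ℝ)) x ∈ X
  n2 : ∀ t : ℝ≥0, ∀ x ∈ X, U2 (-(t:ℝ)) x ∈ X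
  p1 : ∀ t : ℝ≥0, ∀ x ∈ X, Kᗮ.starProjection (U1 t x) ∈ X
  p2 : ∀ t : ℝ≥0, ∀ x ∈ X, Kᗮ.starProjection (U2 t x) ∈ X

theorem Amb.red (h : Amb K U1 U2) (S : Submodule ℂ ↥Kᗮ) (hS : IsClosed (S : Set ↥Kᗮ))
    (n1 : ∀ t, ∀ x ∈ S, ww K U1 t x ∈ S) (n2 : ∀ t, ∀ x ∈ S, ww K U2 t x ∈ S)
    (p1 : ∀ t, ∀ x ∈ S, adjoint (ww K U1 t) x ∈ S) (p2 : ∀ t, ∀ x ∈ S, adjoint (ww K U2 t) x ∈ S) :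
    Red K U1 U2 (S.map Kᗮ.subtype) := by
  refine ⟨?_, ?_, ?_, ?_, ?_, ?_⟩
  · exact (Submodule.isClosed_orthogonal K).isClosedEmbedding_subtypeVal.isClosedMap _ hS
  · rintro _ ⟨x, -, rfl⟩; exact x.2
  · rintro t _ ⟨x, hx, rfl⟩
    exact ⟨_, n1 t x hx, ww_coe h.u1 h.k1 t x⟩
  · rintro t _ ⟨x, hx, rfl⟩
    exact ⟨_, n2 t x hx, ww_coe h.u2 h.k2 t x⟩
  · rintro t _ ⟨x, hx, rfl⟩
    exact ⟨_, p1 t x hx, ww_adj h.u1 t x⟩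
  · rintro t _ ⟨x, hx, rfl⟩
    exact ⟨_, p2 t x hx, ww_adj h.u2 t x⟩

variable (U1 U2) in
def GX (X : Submodule ℂ G) : Submodule ℂ G :=
  (Submodule.span ℂ {y | ∃ (t s : ℝ) (x : G), x ∈ X ∧ y = U1 t (U2 s x)}).topologicalClosure

theorem GX_closed (X : Submodule ℂ G) : IsClosed (GX U1 U2 X : Set G) :=
  Submodule.isClosed_topologicalClosure _

theorem GX_gen (X : Submodule ℂ G) (t s : ℝ) {x : G} (hx : x ∈ X) : U1 t (U2 s x) ∈ GX U1 U2 X :=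
  Submodule.le_topologicalClosure _ (Submodule.subset_span ⟨t, s, x, hx, rfl⟩)

theorem Amb.GX_le (h : Amb K U1 U2) (X : Submodule ℂ G) {x : G} (hx : x ∈ X) : x ∈ GX U1 U2 X := by
  have := GX_gen (U1 := U1) (U2 := U2) X 0 0 hx
  rwa [UG_zero h.u1, UG_zero h.u2] at this

theorem Amb.GX_1 (h : Amb K U1 U2) (X : Submodule ℂ G) (r : ℝ) : ∀ x ∈ GX U1 U2 X, U1 r x ∈ GX U1 U2 X := by
  apply closure_map_mem _ _ _ (GX_closed X)
  rintro _ ⟨t, s, x, hx, rfl⟩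
  rw [← UG_add h.u1]
  exact GX_gen X _ _ hx

theorem Amb.GX_2 (h : Amb K U1 U2) (X : Submodule ℂ G) (r : ℝ) : ∀ x ∈ GX U1 U2 X, U2 r x ∈ GX U1 U2 X := by
  apply closure_map_mem _ _ _ (GX_closed X)
  rintro _ ⟨t, s, x, hx, rfl⟩
  rw [← h.comm, ← UG_add h.u2]
  exact GX_gen X _ _ hx

theorem Amb.GX_P (h : Amb K U1 U2) {X : Submodule ℂ G} (hX : Red K U1 U2 X) :
    ∀ g ∈ GX U1 U2 X, Kᗮ.starProjection g ∈ X := by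
  apply closure_map_mem _ _ _ hX.closed
  rintro _ ⟨t, s, x, hx, rfl⟩
  have key : ∀ t s : ℝ≥0, ∀ x ∈ X, Kᗮ.starProjection (U1 t (U2 s x)) ∈ X := by
    intro t s x hx
    have e : U2 s x = Kᗮ.starProjection (U2 s x) + (U2 s x - Kᗮ.starProjection (U2 s x)) := by abel
    rw [e, map_add, map_add, P_of_mem (h.k1 t _ (sub_P_mem _)), add_zero]
    exact hX.p1 t _ (hX.p2 s x hx)
  have key2 : ∀ t : ℝ≥0, ∀ s : ℝ, ∀ x ∈ X, Kᗮ.starProjection (U1 t (U2 s x)) ∈ X := by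
    intro t s x hx
    rcases le_total 0 s with hs | hs
    · exact key t ⟨s, hs⟩ x hx
    · have h1 := key t 0 _ (hX.n2 (NNReal.mk (-s) (by linarith)) x hx)
      rw [NNReal.coe_zero, UG_zero h.u2, NNReal.coe_mk, neg_neg] at h1
      exact h1
  rcases le_total 0 t with ht | ht
  · exact key2 ⟨t, ht⟩ s x hx
  · have h1 := key2 0 s _ (hX.n1 (NNReal.mk (-t) (by linarith)) x hx)
    rw [NNReal.coe_zero, UG_zero h.u1, NNReal.coe_mk, neg_neg, ← h.comm] at h1
    exact h1

theorem Amb.GX_ortho (h : Amb K U1 U2) {X Y : Submodule ℂ G} (hX : Red K U1 U2 X) (hY : Red K U1 U2 Y)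
    (hXY : ∀ x ∈ X, ∀ y ∈ Y, ⟪x, y⟫_ℂ = 0) : ∀ x ∈ GX U1 U2 X, ∀ y ∈ GX U1 U2 Y, ⟪x, y⟫_ℂ = 0 := by
  intro x hx y hy
  refine closure_ortho _ y ?_ x hx
  rintro _ ⟨t, s, x, hx, rfl⟩
  rw [UG_inner h.u1, UG_inner h.u2, ← P_self (hX.le x hx), P_inner]
  exact hXY x hx _ (h.GX_P hY _ (h.GX_2 Y _ _ (h.GX_1 Y _ _ hy)))

theorem Amb.GX_proj (h : Amb K U1 U2) {X : Submodule ℂ G} (hX : Red K U1 U2 X)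
    [(GX U1 U2 X).HasOrthogonalProjection] {k : G} (hk : k ∈ K) : (GX U1 U2 X).starProjection k ∈ K := by
  apply P_zero_mem
  rw [← proj_comm (GX U1 U2 X) Kᗮ.starProjection, P_of_mem hk, map_zero]
  · intro x hx; exact h.GX_le X (h.GX_P hX x hx)
  · intro x hx
    rw [(isSelfAdjoint_starProjection Kᗮ).adjoint_eq]
    exact h.GX_le X (h.GX_P hX x hx)

end Amb

section Fin1
variable {G : Type} [NormedAddCommGroup G] [InnerProductSpace ℂ G] [CompleteSpace G]
variable {K : Submodule ℂ G} [CompleteSpace ↥K]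
variable {U1 U2 U : ℝ → G →L[ℂ] G} {V V1 V2 : ℝ≥0 → ↥K →L[ℂ] ↥K}

theorem V_adj (hU : IsUnitaryGroup U) (hV : ∀ (t : ℝ≥0) (k : ↥K), U (t:ℝ) (k:G) = (V t k : G)) (t : ℝ≥0)
    (k : ↥K) : (adjoint (V t) k : G) = U (-(t:ℝ)) k - Kᗮ.starProjection (U (-(t:ℝ)) k) := by
  have : adjoint (V t) k = ⟨_, sub_P_mem (K := K) (U (-(t:ℝ)) k)⟩ := by
    apply ext_inner_right ℂ
    intro b
    rw [adjoint_inner_left, Submodule.coe_inner, Submodule.coe_inner, ← hV, inner_sub_left,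
      DK (P_mem _) b.2, sub_zero, UG_inner' hU]
  rw [this]

theorem V_red (hU : IsUnitaryGroup U) (hV : ∀ (t : ℝ≥0) (k : ↥K), U (t:ℝ) (k:G) = (V t k : G))
    (M : Submodule ℂ G) (hM : ∀ r, ∀ x ∈ M, U r x ∈ M) (hP : ∀ x ∈ M, Kᗮ.starProjection x ∈ M) :
    ReducedBy V (M.comap K.subtype) := by
  constructor
  · intro t x hx
    show (V t x : G) ∈ M
    rw [← hV]; exact hM _ _ hx
  · intro t x hx
    show (adjoint (V t) x : G) ∈ M
    rw [V_adj hU hV]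
    exact M.sub_mem (hM _ _ hx) (hP _ (hM _ _ hx))

theorem V_unit (hU : IsUnitaryGroup U) (hV : ∀ (t : ℝ≥0) (k : ↥K), U (t:ℝ) (k:G) = (V t k : G))
    (M : Submodule ℂ G) (hM : ∀ r, ∀ x ∈ M, U r x ∈ M) (hK : ∀ x ∈ M, x ∈ K → ∀ r, U r x ∈ K) :
    IsUnitarySemigroupOn V (M.comap K.subtype) := by
  intro t
  refine ⟨?_, ?_, ?_⟩
  · intro x hx
    show (V t x : G) ∈ M
    rw [← hV]; exact hM _ _ hx
  · intro x hx
    rw [Submodule.coe_norm, ← hV, hU.2.2.1]; rfl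
  · intro y hy
    refine ⟨⟨U (-(t:ℝ)) y, hK y hy y.2 _⟩, hM _ _ hy, ?_⟩
    apply Subtype.ext
    rw [← hV]
    exact UG_inv hU _ _

theorem unit_orbit {H : Type} [NormedAddCommGroup H] [InnerProductSpace ℂ H] [CompleteSpace H]
    {V : ℝ≥0 → H →L[ℂ] H} (j : H → G) (hU : IsUnitaryGroup U)
    (hV : ∀ (t : ℝ≥0) (x : H), U (t:ℝ) (j x) = j (V t x)) (L : Submodule ℂ H)
    (hL : IsUnitarySemigroupOn V L) (l : H) (hl : l ∈ L) (r : ℝ) : ∃ l' ∈ L, U r (j l) = j l' := by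
  rcases le_total 0 r with hr | hr
  · exact ⟨_, (hL (NNReal.mk r hr)).1 l hl, hV (NNReal.mk r hr) l⟩
  · obtain ⟨x, hx, hxl⟩ := (hL (NNReal.mk (-r) (by linarith))).2.2 l hl
    refine ⟨x, hx, ?_⟩
    rw [← hxl, ← hV, NNReal.coe_mk, UG_inv hU]

theorem GX_unit (hU : IsUnitaryGroup U) (M X : Submodule ℂ G) (hM : ∀ r, ∀ x ∈ M, U r x ∈ M)
    (hPX : ∀ g ∈ M, Kᗮ.starProjection g ∈ X) (hX : ∀ x ∈ X, x ∈ Kᗮ) (hXU : ∀ r, ∀ x ∈ X, U r x ∈ X) :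
    ∀ x ∈ M, x ∈ K → ∀ r, U r x ∈ K := by
  intro k hk hkK r
  apply P_zero_mem
  have h1 := hPX _ (hM r k hk)
  rw [← inner_self_eq_zero (𝕜 := ℂ), P_inner, P_self (P_mem _), UG_inner hU, ← inner_conj_symm,
    DK (hX _ (hXU _ _ h1)) hkK, map_zero]

theorem LL_orbit (hU : IsUnitaryGroup U) (hK : ∀ t : ℝ≥0, ∀ k ∈ K, U t k ∈ K) (x : ↥Kᗮ)
    (hx : x ∈ LL (ww K U)) (r : ℝ) :
    (∃ t, U r (x:G) = (ww K U t x : G)) ∨ ∃ t, U r (x:G) = (adjoint (ww K U t) x : G) := by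
  rcases le_total 0 r with hr | hr
  · right
    refine ⟨NNReal.mk r hr, ?_⟩
    have h1 := congrArg (fun y : ↥Kᗮ => U r (y:G)) (hx (NNReal.mk r hr))
    rw [ww_coe hU hK, NNReal.coe_mk, UG_inv hU] at h1
    exact h1.symm
  · left
    refine ⟨NNReal.mk (-r) (by linarith), ?_⟩
    rw [ww_coe hU hK, NNReal.coe_mk, neg_neg]

theorem LL_orbit' (hU : IsUnitaryGroup U) (hK : ∀ t : ℝ≥0, ∀ k ∈ K, U t k ∈ K) (r : ℝ) :
    ∀ x ∈ (LL (ww K U)).map Kᗮ.subtype, U r x ∈ (LL (ww K U)).map Kᗮ.subtype := by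
  rintro _ ⟨x, hx, rfl⟩
  rcases LL_orbit hU hK x hx r with ⟨t, ht⟩ | ⟨t, ht⟩
  · exact ⟨_, LL_self (ww_CSg hU hK) (ww_iso hU hK) t hx, ht.symm⟩
  · exact ⟨_, LL_adj (ww_CSg hU hK) (ww_iso hU hK) t hx, ht.symm⟩

theorem Amb.LL_LL (h : Amb K U1 U2) : ∀ x, x ∈ LL (ww K U1) → x ∈ LL (ww K U2) → x = 0 := by
  intro x h1 h2
  apply Subtype.ext
  apply h.mini
  intro t s k hk
  rw [UG_inner h.u1, UG_inner h.u2, ← inner_conj_symm]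
  have : ∃ y ∈ LL (ww K U2), U1 (-t) (x:G) = (y:G) := by
    rcases LL_orbit h.u1 h.k1 x h1 (-t) with ⟨r, hr⟩ | ⟨r, hr⟩
    · exact ⟨_, h.dc.symm.LL_2 r h2, hr⟩
    · exact ⟨_, h.dc.symm.LL_2adj r h2, hr⟩
  obtain ⟨y, hy, e⟩ := this
  rw [e]
  rcases LL_orbit h.u2 h.k2 y hy (-s) with ⟨r, hr⟩ | ⟨r, hr⟩ <;> rw [hr, DK (Subtype.prop _) hk, map_zero]

theorem Amb.red1 (h : Amb K U1 U2) : Red K U1 U2 ((LL (ww K U1)).map Kᗮ.subtype) :=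
  h.red _ (LL_closed _) (fun t _ hx => LL_self h.dc.h1 h.dc.i1 t hx) (fun t _ hx => h.dc.LL_2 t hx)
    (fun t _ hx => LL_adj h.dc.h1 h.dc.i1 t hx) (fun t _ hx => h.dc.LL_2adj t hx)

theorem Amb.red2 (h : Amb K U1 U2) : Red K U1 U2 ((LL (ww K U2)).map Kᗮ.subtype) :=
  h.red _ (LL_closed _) (fun t _ hx => h.dc.symm.LL_2 t hx) (fun t _ hx => LL_self h.dc.h2 h.dc.i2 t hx)
    (fun t _ hx => h.dc.symm.LL_2adj t hx) (fun t _ hx => LL_adj h.dc.h2 h.dc.i2 t hx)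

theorem Amb.redm (h : Amb K U1 U2) : Red K U1 U2 ((MM (ww K U1) (ww K U2)).map Kᗮ.subtype) :=
  h.red _ MM_closed h.dc.MM_1
    (fun t x hx => h.dc.MM_symm.ge (h.dc.symm.MM_1 t x (h.dc.MM_symm.le hx)))
    h.dc.MM_1adj
    (fun t x hx => h.dc.MM_symm.ge (h.dc.symm.MM_1adj t x (h.dc.MM_symm.le hx)))

theorem Amb.GX_kill (h : Amb K U1 U2) {X : Submodule ℂ G} {l : G} (hl : l ∈ GX U1 U2 X)
    (ho : ∀ t s, ∀ x ∈ X, ⟪U1 t (U2 s x), l⟫_ℂ = 0) : l = 0 := by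
  have := closure_ortho {y | ∃ (t s : ℝ) (x : G), x ∈ X ∧ y = U1 t (U2 s x)} l (by
    rintro _ ⟨t, s, x, hx, rfl⟩; exact ho t s x hx) l hl
  exact inner_self_eq_zero.1 this

theorem Amb.cnu1 (h : Amb K U1 U2) (hV : ∀ (t : ℝ≥0) (k : ↥K), U1 (t:ℝ) (k:G) = (V t k : G))
    {X : Submodule ℂ G} (hX : ∀ x ∈ X, x ∈ Kᗮ) (hXU : ∀ r, ∀ x ∈ X, U2 r x ∈ X) :
    IsCnuOn V ((GX U1 U2 X).comap K.subtype) := by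
  intro L _ hLe _ hu
  rw [Submodule.eq_bot_iff]
  intro l hl
  apply Subtype.ext
  apply h.GX_kill (hLe hl)
  intro t s x hx
  obtain ⟨l', -, e⟩ := unit_orbit (fun k : ↥K => (k:G)) h.u1 hV L hu l hl (-t)
  rw [UG_inner h.u1]
  simp only [Submodule.subtype_apply]
  rw [e]
  exact DK (hX _ (hXU s x hx)) l'.2

theorem Amb.cnu2 (h : Amb K U1 U2) (hV : ∀ (t : ℝ≥0) (k : ↥K), U2 (t:ℝ) (k:G) = (V t k : G))
    {X : Submodule ℂ G} (hX : ∀ x ∈ X, x ∈ Kᗮ) (hXU : ∀ r, ∀ x ∈ X, U1 r x ∈ X) :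
    IsCnuOn V ((GX U1 U2 X).comap K.subtype) := by
  intro L _ hLe _ hu
  rw [Submodule.eq_bot_iff]
  intro l hl
  apply Subtype.ext
  apply h.GX_kill (hLe hl)
  intro t s x hx
  obtain ⟨l', -, e⟩ := unit_orbit (fun k : ↥K => (k:G)) h.u2 hV L hu l hl (-s)
  rw [h.comm, UG_inner h.u2]
  simp only [Submodule.subtype_apply]
  rw [e]
  exact DK (hX _ (hXU t x hx)) l'.2

def rr (U : ℝ → G →L[ℂ] G) (S : Submodule ℂ G) (hS : ∀ r, ∀ x ∈ S, U r x ∈ S) (t : ℝ) : ↥S →L[ℂ] ↥S :=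
  (U t ∘L S.subtypeL).codRestrict S (fun x => hS t x x.2)

theorem rr_coe (S : Submodule ℂ G) (hS : ∀ r, ∀ x ∈ S, U r x ∈ S) (t : ℝ) (x : ↥S) :
    (rr U S hS t x : G) = U t x := rfl

theorem rr_UG (hU : IsUnitaryGroup U) (S : Submodule ℂ G) (hS : ∀ r, ∀ x ∈ S, U r x ∈ S) :
    IsUnitaryGroup (rr U S hS) := by
  refine ⟨?_, ?_, ?_, ?_, ?_⟩
  · ext x; rw [rr_coe, UG_zero hU]; rfl
  · intro s t; ext x; rw [rr_coe, UG_add hU]; rfl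
  · intro t x; rw [Submodule.coe_norm, rr_coe, hU.2.2.1]; rfl
  · intro t x
    refine ⟨⟨U (-t) x, hS _ _ x.2⟩, ?_⟩
    apply Subtype.ext
    rw [rr_coe]; exact UG_inv hU _ _
  · intro x
    exact continuous_induced_rng.2 (hU.2.2.2.2 (x:G))

theorem SGR_iso {H : Type} [NormedAddCommGroup H] [InnerProductSpace ℂ H]
    {V : ℝ≥0 → H →L[ℂ] H} [CompleteSpace H] (hV : IsIsometrySemigroup V) (L : Submodule ℂ H)
    [CompleteSpace ↥L]
    (hL : ∀ t : ℝ≥0, ∀ x ∈ L, V t x ∈ L) : IsIsometrySemigroup (SGRestrict V L hL) := by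
  have c : ∀ t x, (SGRestrict V L hL t x : H) = V t x := fun _ _ => rfl
  refine ⟨⟨?_, ?_, ?_⟩, ?_⟩
  · ext x; rw [c, hV.1.1]; rfl
  · intro s t; ext x; rw [c, hV.1.2.1]; rfl
  · intro x
    exact continuous_induced_rng.2 (hV.1.2.2 (x:H))
  · intro t x
    rw [Submodule.coe_norm, c, hV.2]; rfl

end Fin1

section Fin2
variable {G : Type} [NormedAddCommGroup G] [InnerProductSpace ℂ G] [CompleteSpace G]
variable {K : Submodule ℂ G} [CompleteSpace ↥K]
variable {U1 U2 U : ℝ → G →L[ℂ] G} {V V1 V2 : ℝ≥0 → ↥K →L[ℂ] ↥K}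

theorem Amb.dualBishift (h : Amb K U1 U2) (X S : Submodule ℂ G)
    (hXd : X = (MM (ww K U1) (ww K U2)).map Kᗮ.subtype) (hSd : S = GX U1 U2 X) [CompleteSpace ↥S]
    (hS1 : ∀ r, ∀ x ∈ S, U1 r x ∈ S) (hS2 : ∀ r, ∀ x ∈ S, U2 r x ∈ S)
    (R : Submodule ℂ ↥S) (hR : ∀ x : ↥S, x ∈ R ↔ (x : G) ∈ K) :
    DualIsBishift R (rr U1 S hS1) (rr U2 S hS2) := by
  have hX : Red K U1 U2 X := hXd ▸ h.redm
  have hmS : ∀ m : ↥(MM (ww K U1) (ww K U2)), ((m : ↥Kᗮ) : G) ∈ S := by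
    intro m
    rw [hSd]
    apply h.GX_le
    rw [hXd]
    exact ⟨m, m.2, rfl⟩
  have hmR : ∀ m : ↥(MM (ww K U1) (ww K U2)), (⟨((m : ↥Kᗮ) : G), hmS m⟩ : ↥S) ∈ Rᗮ := by
    intro m
    rw [Submodule.mem_orthogonal']
    intro u hu
    rw [Submodule.coe_inner]
    exact DK (m : ↥Kᗮ).2 ((hR u).1 hu)
  let e0 : ↥(MM (ww K U1) (ww K U2)) →ₗᵢ[ℂ] ↥Rᗮ :=
    { toFun := fun m => ⟨⟨((m : ↥Kᗮ) : G), hmS m⟩, hmR m⟩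
      map_add' := fun a b => rfl
      map_smul' := fun c a => rfl
      norm_map' := fun a => rfl }
  have e0s : Function.Surjective e0 := by
    intro z
    have hz : ((z : ↥S) : G) ∈ GX U1 U2 X := by rw [← hSd]; exact (z : ↥S).2
    have hP := h.GX_P hX _ hz
    set p := Kᗮ.starProjection ((z : ↥S) : G) with hp
    have hpS : p ∈ S := by rw [hSd]; exact h.GX_le X hP
    have hk : ((z : ↥S) : G) - p ∈ K := sub_P_mem _
    have h1 : ⟪((z : ↥S) : G), ((z : ↥S) : G) - p⟫_ℂ = 0 := by
      have := (Submodule.mem_orthogonal' _ _).1 z.2 ((z : ↥S) - ⟨p, hpS⟩) ((hR _).2 hk)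
      exact this
    have h2 : ⟪p, ((z : ↥S) : G) - p⟫_ℂ = 0 := DK (P_mem _) hk
    have h3 : ((z : ↥S) : G) - p = 0 := by
      rw [← inner_self_eq_zero (𝕜 := ℂ), inner_sub_left, h1, h2, sub_zero]
    rw [hXd] at hP
    obtain ⟨m, hm, hmp⟩ := hP
    refine ⟨⟨m, hm⟩, ?_⟩
    apply Subtype.ext
    apply Subtype.ext
    exact hmp.trans (sub_eq_zero.1 h3).symm
  let e := LinearIsometryEquiv.ofSurjective e0 e0s
  have ec : ∀ m, ((e m : ↥S) : G) = ((m : ↥Kᗮ) : G) := fun m => rfl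
  obtain ⟨F, i1, i2, i3, Z, hZ⟩ := h.dc.exists_Z'
  refine ⟨F, i1, i2, i3, e.symm.trans Z, ?_⟩
  have zc : ∀ f, (((e.symm.trans Z).symm f : ↥S) : G) = ((Z.symm f : ↥Kᗮ) : G) := fun f => rfl
  intro t ht f g
  constructor
  · intro hg
    apply Subtype.ext
    rw [UG_adj (rr_UG h.u1 S hS1), rr_coe, zc, zc]
    have := (hZ (NNReal.mk t ht) f g).1 hg
    rw [← this, ww_coe h.u1 h.k1]; rfl
  · intro hg
    apply Subtype.ext
    rw [UG_adj (rr_UG h.u2 S hS2), rr_coe, zc, zc]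
    have := (hZ (NNReal.mk t ht) f g).2 hg
    rw [← this, ww_coe h.u2 h.k2]; rfl

theorem Amb.modified (h : Amb K U1 U2) (h1 : IsIsometrySemigroup V1) (h2 : IsIsometrySemigroup V2)
    (hc : SgCommute V1 V2)
    (hV1 : ∀ (t : ℝ≥0) (k : ↥K), U1 (t:ℝ) (k:G) = (V1 t k : G))
    (hV2 : ∀ (t : ℝ≥0) (k : ↥K), U2 (t:ℝ) (k:G) = (V2 t k : G))
    (X S : Submodule ℂ G) (hXd : X = (MM (ww K U1) (ww K U2)).map Kᗮ.subtype) (hSd : S = GX U1 U2 X)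
    (cs : CompleteSpace ↥(S.comap K.subtype)) (i1 : ∀ t : ℝ≥0, ∀ x ∈ S.comap K.subtype, V1 t x ∈ S.comap K.subtype)
    (i2 : ∀ t : ℝ≥0, ∀ x ∈ S.comap K.subtype, V2 t x ∈ S.comap K.subtype) :
    @IsModifiedBishift ↥(S.comap K.subtype) _ _ cs (SGRestrict V1 _ i1) (SGRestrict V2 _ i2) := by
  have hX : Red K U1 U2 X := hXd ▸ h.redm
  have hS1 : ∀ r, ∀ x ∈ S, U1 r x ∈ S := by rw [hSd]; exact h.GX_1 X
  have hS2 : ∀ r, ∀ x ∈ S, U2 r x ∈ S := by rw [hSd]; exact h.GX_2 X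
  have cS : CompleteSpace ↥S := by
    rw [hSd]; exact (GX_closed X).completeSpace_coe
  refine ⟨SGR_iso h1 _ i1, SGR_iso h2 _ i2, ?_, ?_, ?_⟩
  · intro t s
    ext x
    have := congrArg (fun A : ↥K →L[ℂ] ↥K => ((A x : ↥K) : G)) (hc t s)
    exact this
  · intro L _ _ _ hu1 hu2
    rw [Submodule.eq_bot_iff]
    intro l hl
    apply Subtype.ext
    apply Subtype.ext
    apply h.GX_kill (X := X) (hSd ▸ l.2)
    intro t s x hx
    have e1 : ∀ (t : ℝ≥0) (x : ↥(S.comap K.subtype)), U1 (t:ℝ) ((x : ↥K) : G) =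
      ((SGRestrict V1 _ i1 t x : ↥K) : G) := fun t x => hV1 t x
    have e2 : ∀ (t : ℝ≥0) (x : ↥(S.comap K.subtype)), U2 (t:ℝ) ((x : ↥K) : G) =
      ((SGRestrict V2 _ i2 t x : ↥K) : G) := fun t x => hV2 t x
    obtain ⟨l', hl', e⟩ := unit_orbit (fun k : ↥(S.comap K.subtype) => ((k : ↥K) : G)) h.u1 e1 L hu1 l hl (-t)
    obtain ⟨l2, hl2, e'⟩ := unit_orbit (fun k : ↥(S.comap K.subtype) => ((k : ↥K) : G)) h.u2 e2 L hu2 l' hl' (-s)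
    rw [UG_inner h.u1, UG_inner h.u2]
    rw [e, e']
    exact DK (hX.le x hx) (l2 : ↥K).2
  · let J : ↥(S.comap K.subtype) →ₗᵢ[ℂ] ↥S :=
      { toFun := fun x => ⟨((x : ↥K) : G), x.2⟩
        map_add' := fun a b => rfl
        map_smul' := fun c a => rfl
        norm_map' := fun a => rfl }
    have Jc : ∀ x, (J x : G) = ((x : ↥K) : G) := fun x => rfl
    refine ⟨↥S, inferInstance, inferInstance, cS, J, rr U1 S hS1, rr U2 S hS2, rr_UG h.u1 S hS1,
      rr_UG h.u2 S hS2, ?_, ?_, ?_, ?_⟩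
    · intro s t
      ext x
      exact h.comm s t x
    · intro t x
      exact ⟨Subtype.ext (hV1 t x), Subtype.ext (hV2 t x)⟩
    · rw [Submodule.topologicalClosure_eq_top_iff, Submodule.eq_bot_iff]
      intro z hz
      rw [Submodule.mem_orthogonal] at hz
      apply Subtype.ext
      apply h.mini
      intro t s k hk
      have : (GX U1 U2 X).HasOrthogonalProjection := by
        rw [← hSd]; infer_instance
      have hp := h.GX_proj hX hk
      have hpS : (GX U1 U2 X).starProjection k ∈ S := by
        rw [hSd]; exact Submodule.starProjection_apply_mem _ _
      have hz1 := hz _ (Submodule.subset_span ⟨t, s, ⟨⟨_, hp⟩, hpS⟩, rfl⟩)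
      rw [Submodule.coe_inner, rr_coe, rr_coe, Jc, UG_inner h.u1, UG_inner h.u2] at hz1
      rw [UG_inner h.u1, UG_inner h.u2, ← hz1]
      have hw : U2 (-s) (U1 (-t) (z:G)) ∈ GX U1 U2 X := by
        apply h.GX_2; apply h.GX_1; rw [← hSd]; exact z.2
      have := Submodule.inner_starProjection_left_eq_right (GX U1 U2 X) k (U2 (-s) (U1 (-t) (z:G)))
      rw [Submodule.starProjection_eq_self_iff.2 hw] at this
      exact this.symm
    · apply h.dualBishift X S hXd hSd
      intro x
      constructor
      · rintro ⟨y, rfl⟩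
        exact (y : ↥K).2
      · intro hx
        exact ⟨⟨⟨x, hx⟩, x.2⟩, rfl⟩

end Fin2

/-- Cooper-type decomposition for a dual doubly commuting pair of commuting semigroups of
isometries: `H = H_m ⊕ H_{p,u} ⊕ H_{u,p} ⊕ H_{u,u}`, where on `H_m` the pair is a
modified-bishift-semigroup. -/
theorem dual_doubly_commuting_decomposition {G : Type} [NormedAddCommGroup G]
    [InnerProductSpace ℂ G] [CompleteSpace G] (K : Submodule ℂ G) [CompleteSpace ↥K]
    (V1 V2 : ℝ≥0 → ↥K →L[ℂ] ↥K)
    (h1 : IsIsometrySemigroup V1) (h2 : IsIsometrySemigroup V2) (hc : SgCommute V1 V2)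
    (U1 U2 : ℝ → G →L[ℂ] G) (hext : IsMinimalUnitaryExtension K V1 V2 U1 U2)
    (hddc : DualDoublyCommutes K U1 U2) :
    ∃ Hm Hpu Hup Huu : Submodule ℂ ↥K,
      (IsClosed (Hm : Set ↥K) ∧ IsClosed (Hpu : Set ↥K) ∧
        IsClosed (Hup : Set ↥K) ∧ IsClosed (Huu : Set ↥K)) ∧
      (OrthoSubspaces Hm Hpu ∧ OrthoSubspaces Hm Hup ∧ OrthoSubspaces Hm Huu ∧
        OrthoSubspaces Hpu Hup ∧ OrthoSubspaces Hpu Huu ∧ OrthoSubspaces Hup Huu) ∧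
      Hm ⊔ Hpu ⊔ Hup ⊔ Huu = ⊤ ∧
      (ReducedBy V1 Hm ∧ ReducedBy V2 Hm ∧ ReducedBy V1 Hpu ∧ ReducedBy V2 Hpu ∧
        ReducedBy V1 Hup ∧ ReducedBy V2 Hup ∧ ReducedBy V1 Huu ∧ ReducedBy V2 Huu) ∧
      (∃ (cs : CompleteSpace ↥Hm) (i1 : ∀ t : ℝ≥0, ∀ x ∈ Hm, V1 t x ∈ Hm)
          (i2 : ∀ t : ℝ≥0, ∀ x ∈ Hm, V2 t x ∈ Hm),
        @IsModifiedBishift ↥Hm _ _ cs (SGRestrict V1 Hm i1) (SGRestrict V2 Hm i2)) ∧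
      (IsCnuOn V1 Hpu ∧ IsUnitarySemigroupOn V2 Hpu) ∧
      (IsUnitarySemigroupOn V1 Hup ∧ IsCnuOn V2 Hup) ∧
      (IsUnitarySemigroupOn V1 Huu ∧ IsUnitarySemigroupOn V2 Huu) := by
  have h := mkAmb hext hddc
  have hV1 : ∀ (t : ℝ≥0) (k : ↥K), U1 (t:ℝ) (k:G) = (V1 t k : G) := fun t k => (hext.2.2.2.1 t k).1
  have hV2 : ∀ (t : ℝ≥0) (k : ↥K), U2 (t:ℝ) (k:G) = (V2 t k : G) := fun t k => (hext.2.2.2.1 t k).2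
  obtain ⟨Xm, hXm⟩ : ∃ X, X = (MM (ww K U1) (ww K U2)).map Kᗮ.subtype := ⟨_, rfl⟩
  obtain ⟨Xa, hXa⟩ : ∃ X, X = (LL (ww K U1)).map Kᗮ.subtype := ⟨_, rfl⟩
  obtain ⟨Xb, hXb⟩ : ∃ X, X = (LL (ww K U2)).map Kᗮ.subtype := ⟨_, rfl⟩
  have rm : Red K U1 U2 Xm := hXm ▸ h.redm
  have ra : Red K U1 U2 Xa := hXa ▸ h.red1
  have rb : Red K U1 U2 Xb := hXb ▸ h.red2
  have Ua : ∀ r, ∀ x ∈ Xa, U1 r x ∈ Xa := by rw [hXa]; exact LL_orbit' h.u1 h.k1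
  have Ub : ∀ r, ∀ x ∈ Xb, U2 r x ∈ Xb := by rw [hXb]; exact LL_orbit' h.u2 h.k2
  have oma : ∀ x ∈ Xm, ∀ y ∈ Xa, ⟪x, y⟫_ℂ = 0 := by
    rw [hXm, hXa]
    rintro _ ⟨x, hx, rfl⟩ _ ⟨y, hy, rfl⟩
    exact h.dc.MM_LL hx hy
  have omb : ∀ x ∈ Xm, ∀ y ∈ Xb, ⟪x, y⟫_ℂ = 0 := by
    rw [hXm, hXb]
    rintro _ ⟨x, hx, rfl⟩ _ ⟨y, hy, rfl⟩
    exact h.dc.symm.MM_LL (h.dc.MM_symm.le hx) hy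
  have oba : ∀ x ∈ Xb, ∀ y ∈ Xa, ⟪x, y⟫_ℂ = 0 := by
    rw [hXa, hXb]
    rintro _ ⟨x, hx, rfl⟩ _ ⟨y, hy, rfl⟩
    exact h.dc.symm.LL_LL (fun x a b => h.LL_LL x b a) hx hy
  have Oma := h.GX_ortho rm ra oma
  have Omb := h.GX_ortho rm rb omb
  have Oba := h.GX_ortho rb ra oba
  obtain ⟨N, hN⟩ : ∃ N : Submodule ℂ G, N = (GX U1 U2 Xm)ᗮ ⊓ (GX U1 U2 Xa)ᗮ ⊓ (GX U1 U2 Xb)ᗮ := ⟨_, rfl⟩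
  have Nc : IsClosed (N : Set G) := by
    rw [hN]
    exact ((Submodule.isClosed_orthogonal _).inter (Submodule.isClosed_orthogonal _)).inter
      (Submodule.isClosed_orthogonal _)
  have oU1 : ∀ X : Submodule ℂ G, ∀ r, ∀ x ∈ (GX U1 U2 X)ᗮ, U1 r x ∈ (GX U1 U2 X)ᗮ := by
    intro X r x hx
    rw [Submodule.mem_orthogonal] at hx ⊢
    intro u hu
    rw [UG_inner' h.u1]
    exact hx _ (h.GX_1 X _ _ hu)
  have oU2 : ∀ X : Submodule ℂ G, ∀ r, ∀ x ∈ (GX U1 U2 X)ᗮ, U2 r x ∈ (GX U1 U2 X)ᗮ := by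
    intro X r x hx
    rw [Submodule.mem_orthogonal] at hx ⊢
    intro u hu
    rw [UG_inner' h.u2]
    exact hx _ (h.GX_2 X _ _ hu)
  have oP : ∀ X : Submodule ℂ G, Red K U1 U2 X → ∀ x ∈ (GX U1 U2 X)ᗮ, Kᗮ.starProjection x ∈ (GX U1 U2 X)ᗮ := by
    intro X hX x hx
    rw [Submodule.mem_orthogonal] at hx ⊢
    intro u hu
    rw [← P_inner]
    exact hx _ (h.GX_le X (h.GX_P hX _ hu))
  have N1 : ∀ r, ∀ x ∈ N, U1 r x ∈ N := by
    rw [hN]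
    rintro r x ⟨⟨a, b⟩, c⟩
    exact ⟨⟨oU1 _ r x a, oU1 _ r x b⟩, oU1 _ r x c⟩
  have N2 : ∀ r, ∀ x ∈ N, U2 r x ∈ N := by
    rw [hN]
    rintro r x ⟨⟨a, b⟩, c⟩
    exact ⟨⟨oU2 _ r x a, oU2 _ r x b⟩, oU2 _ r x c⟩
  have NP : ∀ x ∈ N, Kᗮ.starProjection x ∈ N := by
    rw [hN]
    rintro x ⟨⟨a, b⟩, c⟩
    exact ⟨⟨oP _ rm x a, oP _ ra x b⟩, oP _ rb x c⟩
  have NK : ∀ x ∈ N, x ∈ K := by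
    intro x hx
    apply P_zero_mem
    have hp := NP x hx
    rw [hN] at hp
    obtain ⟨⟨a, b⟩, c⟩ := hp
    replace a := (Submodule.mem_orthogonal' _ _).1 a
    replace b := (Submodule.mem_orthogonal' _ _).1 b
    replace c := (Submodule.mem_orthogonal' _ _).1 c
    have := h.dc.complete (x := ⟨Kᗮ.starProjection x, P_mem x⟩)
      (fun y hy => a _ (h.GX_le _ (by rw [hXm]; exact ⟨y, hy, rfl⟩)))
      (fun y hy => b _ (h.GX_le _ (by rw [hXa]; exact ⟨y, hy, rfl⟩)))
      (fun y hy => c _ (h.GX_le _ (by rw [hXb]; exact ⟨y, hy, rfl⟩)))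
    exact congrArg Subtype.val this
  have cl : ∀ S : Submodule ℂ G, IsClosed (S : Set G) → IsClosed ((S.comap K.subtype : Submodule ℂ ↥K) : Set ↥K) :=
    fun S hS => hS.preimage continuous_subtype_val
  have gP : ∀ X : Submodule ℂ G, Red K U1 U2 X → ∀ x ∈ GX U1 U2 X, Kᗮ.starProjection x ∈ GX U1 U2 X :=
    fun X hX x hx => h.GX_le X (h.GX_P hX x hx)
  have i1 := V_red h.u1 hV1 _ (h.GX_1 Xm) (gP Xm rm)
  have i2 := V_red h.u2 hV2 _ (h.GX_2 Xm) (gP Xm rm)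
  refine ⟨(GX U1 U2 Xm).comap K.subtype, (GX U1 U2 Xb).comap K.subtype, (GX U1 U2 Xa).comap K.subtype,
    N.comap K.subtype, ⟨cl _ (GX_closed _), cl _ (GX_closed _), cl _ (GX_closed _), cl _ Nc⟩,
    ⟨?_, ?_, ?_, ?_, ?_, ?_⟩, ?_, ⟨i1, i2, ?_, ?_, ?_, ?_, ?_, ?_⟩, ?_, ⟨?_, ?_⟩, ⟨?_, ?_⟩, ⟨?_, ?_⟩⟩
  · exact fun x hx y hy => Omb x hx y hy
  · exact fun x hx y hy => Oma x hx y hy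
  · intro x hx y hy
    have : (y : G) ∈ N := hy
    rw [hN] at this
    exact (Submodule.mem_orthogonal _ _).1 this.1.1 x hx
  · exact fun x hx y hy => Oba x hx y hy
  · intro x hx y hy
    have : (y : G) ∈ N := hy
    rw [hN] at this
    exact (Submodule.mem_orthogonal _ _).1 this.2 x hx
  · intro x hx y hy
    have : (y : G) ∈ N := hy
    rw [hN] at this
    exact (Submodule.mem_orthogonal _ _).1 this.1.2 x hx
  · rw [eq_top_iff]
    rintro k -
    have cm : CompleteSpace ↥(GX U1 U2 Xm) := (GX_closed Xm).completeSpace_coe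
    have ca : CompleteSpace ↥(GX U1 U2 Xa) := (GX_closed Xa).completeSpace_coe
    have cb : CompleteSpace ↥(GX U1 U2 Xb) := (GX_closed Xb).completeSpace_coe
    obtain ⟨km, hkm⟩ : ∃ y : ↥K, (y:G) = (GX U1 U2 Xm).starProjection k := ⟨⟨_, h.GX_proj rm k.2⟩, rfl⟩
    obtain ⟨ka, hka⟩ : ∃ y : ↥K, (y:G) = (GX U1 U2 Xa).starProjection k := ⟨⟨_, h.GX_proj ra k.2⟩, rfl⟩
    obtain ⟨kb, hkb⟩ : ∃ y : ↥K, (y:G) = (GX U1 U2 Xb).starProjection k := ⟨⟨_, h.GX_proj rb k.2⟩, rfl⟩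
    have mm : (km : G) ∈ GX U1 U2 Xm := by rw [hkm]; exact Submodule.starProjection_apply_mem _ _
    have ma : (ka : G) ∈ GX U1 U2 Xa := by rw [hka]; exact Submodule.starProjection_apply_mem _ _
    have mb : (kb : G) ∈ GX U1 U2 Xb := by rw [hkb]; exact Submodule.starProjection_apply_mem _ _
    have om : ∀ u ∈ GX U1 U2 Xm, ⟪u, (k:G) - km⟫_ℂ = 0 := by
      rw [hkm]; exact (Submodule.mem_orthogonal _ _).1 (Submodule.sub_starProjection_mem_orthogonal _)
    have oa : ∀ u ∈ GX U1 U2 Xa, ⟪u, (k:G) - ka⟫_ℂ = 0 := by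
      rw [hka]; exact (Submodule.mem_orthogonal _ _).1 (Submodule.sub_starProjection_mem_orthogonal _)
    have ob : ∀ u ∈ GX U1 U2 Xb, ⟪u, (k:G) - kb⟫_ℂ = 0 := by
      rw [hkb]; exact (Submodule.mem_orthogonal _ _).1 (Submodule.sub_starProjection_mem_orthogonal _)
    have e : k = km + kb + ka + (k - km - kb - ka) := by abel
    rw [e]
    refine Submodule.add_mem_sup (Submodule.add_mem_sup (Submodule.add_mem_sup mm mb) ma) ?_
    show (k : G) - km - kb - ka ∈ N
    have sw : ∀ {x y : G}, ⟪x, y⟫_ℂ = 0 → ⟪y, x⟫_ℂ = 0 := fun hh => inner_eq_zero_symm.1 hh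
    rw [hN]
    refine ⟨⟨?_, ?_⟩, ?_⟩
    · refine (Submodule.mem_orthogonal _ _).2 fun u hu => ?_
      rw [inner_sub_right, inner_sub_right, om u hu, Omb u hu _ mb, Oma u hu _ ma]; simp
    · refine (Submodule.mem_orthogonal _ _).2 fun u hu => ?_
      have := oa u hu
      rw [inner_sub_right] at this
      rw [inner_sub_right, inner_sub_right, inner_sub_right, sw (Oma _ mm u hu), sw (Oba _ mb u hu)]
      simpa using this
    · refine (Submodule.mem_orthogonal _ _).2 fun u hu => ?_
      have := ob u hu
      rw [inner_sub_right] at this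
      rw [inner_sub_right, inner_sub_right, inner_sub_right, sw (Omb _ mm u hu), Oba u hu _ ma]
      simpa using this
  · exact V_red h.u1 hV1 _ (h.GX_1 Xb) (gP Xb rb)
  · exact V_red h.u2 hV2 _ (h.GX_2 Xb) (gP Xb rb)
  · exact V_red h.u1 hV1 _ (h.GX_1 Xa) (gP Xa ra)
  · exact V_red h.u2 hV2 _ (h.GX_2 Xa) (gP Xa ra)
  · exact V_red h.u1 hV1 _ N1 NP
  · exact V_red h.u2 hV2 _ N2 NP
  · exact ⟨(cl _ (GX_closed _)).completeSpace_coe, i1.1, i2.1,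
      h.modified h1 h2 hc hV1 hV2 Xm _ hXm rfl _ _ _⟩
  · exact h.cnu1 hV1 rb.le Ub
  · exact V_unit h.u2 hV2 _ (h.GX_2 Xb) (GX_unit h.u2 _ Xb (h.GX_2 Xb) (h.GX_P rb) rb.le Ub)
  · exact V_unit h.u1 hV1 _ (h.GX_1 Xa) (GX_unit h.u1 _ Xa (h.GX_1 Xa) (h.GX_P ra) ra.le Ua)
  · exact h.cnu2 hV2 ra.le Ua
  · exact V_unit h.u1 hV1 _ N1 fun x hx _ r => NK _ (N1 r x hx)
  · exact V_unit h.u2 hV2 _ N2 fun x hx _ r => NK _ (N2 r x hx)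
end
end

section
/- Let (V₁, V₂) be a commuting pair of C₀-semigroups of isometries on a complex Hilbert space H. Then (V₁, V₂) is simultaneously doubly commuting and dual doubly commuting if and only if H decomposes as an orthogonal direct sum H = H_{p,u} ⊕ H_{u,p} ⊕ H_{u,u} of closed subspaces, each reducing both V₁ and V₂, such that: (1) V₁|_{H_{p,u}} is completely nonunitary and V₂|_{H_{p,u}} is a unitary semigroup; (2) V₁|_{H_{u,p}} is a unitary semigroup and V₂|_{H_{u,p}} is completely nonunitary; (3) both V₁|_{H_{u,u}} and V₂|_{H_{u,u}} are unitary semigroups. -/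
open MeasureTheory ContinuousLinearMap
open scoped ENNReal NNReal InnerProductSpace ComplexInnerProductSpace

noncomputable section

section Helpers

variable {H : Type} [NormedAddCommGroup H] [InnerProductSpace ℂ H] [CompleteSpace H]

theorem aux_adj_self (T : H →L[ℂ] H) (hT : ∀ x, ‖T x‖ = ‖x‖) (x : H) :
    adjoint T (T x) = x := by
  have h := (ContinuousLinearMap.norm_map_iff_adjoint_comp_self T).1 hT
  have := congrArg (fun f : H →L[ℂ] H => f x) h
  simpa using this

theorem aux_red_orth {V : ℝ≥0 → H →L[ℂ] H} {L : Submodule ℂ H} (h : ReducedBy V L) :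
    ReducedBy V Lᗮ := by
  refine ⟨fun t x hx => ?_, fun t x hx => ?_⟩
  · rw [Submodule.mem_orthogonal] at hx ⊢
    intro u hu
    rw [← adjoint_inner_left]
    exact hx _ (h.2 t u hu)
  · rw [Submodule.mem_orthogonal] at hx ⊢
    intro u hu
    rw [adjoint_inner_right]
    exact hx _ (h.1 t u hu)

theorem aux_red_inf {V : ℝ≥0 → H →L[ℂ] H} {L M : Submodule ℂ H} (h : ReducedBy V L)
    (h' : ReducedBy V M) : ReducedBy V (L ⊓ M) :=
  ⟨fun t x hx => ⟨h.1 t x hx.1, h'.1 t x hx.2⟩, fun t x hx => ⟨h.2 t x hx.1, h'.2 t x hx.2⟩⟩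

/-- The unitary part. -/
def auxHu (V : ℝ≥0 → H →L[ℂ] H) : Submodule ℂ H where
  carrier := {x | ∀ t, V t (adjoint (V t) x) = x}
  add_mem' := by
    intro a b ha hb t
    simp [ha t, hb t]
  zero_mem' := by
    intro t
    simp
  smul_mem' := by
    intro c x hx t
    simp [hx t]

theorem auxHu_mem {V : ℝ≥0 → H →L[ℂ] H} {x : H} :
    x ∈ auxHu V ↔ ∀ t, V t (adjoint (V t) x) = x := Iff.rfl

theorem auxHu_closed (V : ℝ≥0 → H →L[ℂ] H) : IsClosed (auxHu V : Set H) := by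
  have : (auxHu V : Set H) = ⋂ t, {x | V t (adjoint (V t) x) = x} := by
    ext x
    simp [auxHu_mem]
  rw [this]
  refine isClosed_iInter fun t => isClosed_eq ?_ continuous_id
  exact (V t).continuous.comp (adjoint (V t)).continuous

theorem auxHu_range {V : ℝ≥0 → H →L[ℂ] H} (hV : IsIsometrySemigroup V) {x : H}
    (h : ∀ t, ∃ y, V t y = x) : x ∈ auxHu V := by
  intro t
  obtain ⟨y, rfl⟩ := h t
  rw [aux_adj_self _ (hV.2 t)]

theorem auxHu_red {V : ℝ≥0 → H →L[ℂ] H} (hV : IsIsometrySemigroup V) :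
    ReducedBy V (auxHu V) := by
  have hadd : ∀ s t x, V (s + t) x = V s (V t x) := fun s t x => by rw [hV.1.2.1 s t]; rfl
  refine ⟨fun r x hx => auxHu_range hV fun t => ?_, fun r x hx => auxHu_range hV fun t => ?_⟩
  · refine ⟨V r (adjoint (V t) x), ?_⟩
    rw [← hadd, add_comm, hadd, hx t]
  · refine ⟨adjoint (V (r + t)) x, ?_⟩
    conv_rhs => rw [← hx (r + t), hadd, aux_adj_self _ (hV.2 r)]

theorem auxDC_symm {V W : ℝ≥0 → H →L[ℂ] H} (h : SgDoublyCommute V W) : SgDoublyCommute W V := by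
  refine ⟨fun t s => (h.1 s t).symm, fun t s => ?_⟩
  have := congrArg adjoint (h.2 s t)
  simpa [adjoint_comp] using this

theorem auxDC_adj {V W : ℝ≥0 → H →L[ℂ] H} (h : SgCommute V W) (t s : ℝ≥0) (x : H) :
    adjoint (V t) (adjoint (W s) x) = adjoint (W s) (adjoint (V t) x) := by
  have := congrArg adjoint (h t s)
  rw [adjoint_comp, adjoint_comp] at this
  exact (congrArg (fun f : H →L[ℂ] H => f x) this).symm

theorem auxDC_app {V W : ℝ≥0 → H →L[ℂ] H} (h : SgDoublyCommute V W) (t s : ℝ≥0) (x : H) :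
    V t (adjoint (W s) x) = adjoint (W s) (V t x) :=
  congrArg (fun f : H →L[ℂ] H => f x) (h.2 t s)

theorem auxC_app {V W : ℝ≥0 → H →L[ℂ] H} (h : SgCommute V W) (t s : ℝ≥0) (x : H) :
    V t (W s x) = W s (V t x) :=
  congrArg (fun f : H →L[ℂ] H => f x) (h t s)

theorem auxHu_red' {V W : ℝ≥0 → H →L[ℂ] H} (h : SgDoublyCommute V W) :
    ReducedBy W (auxHu V) := by
  refine ⟨fun s x hx t => ?_, fun s x hx t => ?_⟩
  · rw [← auxDC_app (auxDC_symm h), auxC_app h.1, hx t]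
  · rw [auxDC_adj h.1, auxDC_app h, hx t]

theorem aux_unitary {V : ℝ≥0 → H →L[ℂ] H} (hV : IsIsometrySemigroup V) {L : Submodule ℂ H}
    (hL : ReducedBy V L) (hle : L ≤ auxHu V) : IsUnitarySemigroupOn V L := fun t =>
  ⟨hL.1 t, fun x _ => hV.2 t x, fun y hy => ⟨adjoint (V t) y, hL.2 t y hy, hle hy t⟩⟩

theorem aux_cnu {V : ℝ≥0 → H →L[ℂ] H} (hV : IsIsometrySemigroup V) :
    IsCnuOn V (auxHu V)ᗮ := by
  intro L _ hle _ hu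
  rw [eq_bot_iff]
  intro x hx
  have h1 : x ∈ auxHu V := auxHu_range hV fun t => by
    obtain ⟨y, _, hy⟩ := (hu t).2.2 x hx
    exact ⟨y, hy⟩
  have := Submodule.inner_right_of_mem_orthogonal h1 (hle hx)
  simpa using this

theorem aux_orth_le {V W : ℝ≥0 → H →L[ℂ] H} (hV : IsIsometrySemigroup V)
    (hW : IsIsometrySemigroup W) (h : SgDoublyCommute V W)
    (hz : ∀ t s x, adjoint (V t) x = 0 → adjoint (W s) x = 0 → x = 0) :
    (auxHu V)ᗮ ≤ auxHu W := by
  intro x hx s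
  have hr := aux_red_orth (auxHu_red' h)
  set y := x - W s (adjoint (W s) x) with hy
  have hy1 : y ∈ (auxHu V)ᗮ := Submodule.sub_mem _ hx (hr.1 _ _ (hr.2 _ _ hx))
  have hy0 : adjoint (W s) y = 0 := by
    rw [hy, map_sub, aux_adj_self _ (hW.2 s), sub_self]
  have hy2 : y ∈ auxHu V := by
    intro t
    have : y - V t (adjoint (V t) y) = 0 := by
      apply hz t s
      · rw [map_sub, aux_adj_self _ (hV.2 t), sub_self]
      · rw [map_sub, ← auxDC_app h, ← auxDC_adj h.1, hy0]
        simp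
    exact (sub_eq_zero.1 this).symm
  have := Submodule.inner_right_of_mem_orthogonal hy2 hy1
  rw [inner_self_eq_zero] at this
  exact (sub_eq_zero.1 this).symm

theorem aux_forward {V W : ℝ≥0 → H →L[ℂ] H} (hV : IsIsometrySemigroup V)
    (hW : IsIsometrySemigroup W) (h : SgDoublyCommute V W)
    (hz : ∀ t s x, adjoint (V t) x = 0 → adjoint (W s) x = 0 → x = 0) :
    ∃ Hpu Hup Huu : Submodule ℂ H,
      (IsClosed (Hpu : Set H) ∧ IsClosed (Hup : Set H) ∧ IsClosed (Huu : Set H)) ∧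
      (OrthoSubspaces Hpu Hup ∧ OrthoSubspaces Hpu Huu ∧ OrthoSubspaces Hup Huu) ∧
      Hpu ⊔ Hup ⊔ Huu = ⊤ ∧
      (ReducedBy V Hpu ∧ ReducedBy W Hpu ∧ ReducedBy V Hup ∧ ReducedBy W Hup ∧
        ReducedBy V Huu ∧ ReducedBy W Huu) ∧
      (IsCnuOn V Hpu ∧ IsUnitarySemigroupOn W Hpu) ∧
      (IsUnitarySemigroupOn V Hup ∧ IsCnuOn W Hup) ∧
      (IsUnitarySemigroupOn V Huu ∧ IsUnitarySemigroupOn W Huu) := by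
  have h' := auxDC_symm h
  have hle1 := aux_orth_le hV hW h hz
  have hle2 := aux_orth_le hW hV h' (fun t s x a b => hz s t x b a)
  have r1 := auxHu_red hV
  have r2 := auxHu_red hW
  have r12 := auxHu_red' h
  have r21 := auxHu_red' h'
  have c1 : CompleteSpace (auxHu V) := (auxHu_closed V).completeSpace_coe
  have c2 : CompleteSpace (auxHu W) := (auxHu_closed W).completeSpace_coe
  refine ⟨(auxHu V)ᗮ, (auxHu W)ᗮ, auxHu V ⊓ auxHu W,
    ⟨Submodule.isClosed_orthogonal _, Submodule.isClosed_orthogonal _, ?_⟩, ⟨?_, ?_, ?_⟩, ?_,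
    ⟨aux_red_orth r1, aux_red_orth r12, aux_red_orth r21, aux_red_orth r2,
      aux_red_inf r1 r21, aux_red_inf r12 r2⟩,
    ⟨aux_cnu hV, aux_unitary hW (aux_red_orth r12) hle1⟩,
    ⟨aux_unitary hV (aux_red_orth r21) hle2, aux_cnu hW⟩,
    aux_unitary hV (aux_red_inf r1 r21) inf_le_left,
    aux_unitary hW (aux_red_inf r12 r2) inf_le_right⟩
  · exact (auxHu_closed V).inter (auxHu_closed W)
  · exact fun x hx y hy => Submodule.inner_right_of_mem_orthogonal (hle1 hx) hy
  · exact fun x hx y hy => Submodule.inner_left_of_mem_orthogonal hy.1 hx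
  · exact fun x hx y hy => Submodule.inner_left_of_mem_orthogonal hy.2 hx
  · rw [eq_top_iff]
    intro x _
    obtain ⟨a, ha, b, hb, rfl⟩ := (auxHu V).exists_add_mem_mem_orthogonal x
    obtain ⟨c, hc, d, hd, rfl⟩ := (auxHu W).exists_add_mem_mem_orthogonal a
    have hc1 : c ∈ auxHu V := by
      have := Submodule.sub_mem _ ha (hle2 hd)
      simpa using this
    refine Submodule.add_mem _ (Submodule.add_mem _ ?_ ?_) ?_
    · exact Submodule.mem_sup_right ⟨hc1, hc⟩
    · exact Submodule.mem_sup_left (Submodule.mem_sup_right hd)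
    · exact Submodule.mem_sup_left (Submodule.mem_sup_left hb)

theorem aux_dc1 {V W : ℝ≥0 → H →L[ℂ] H} (hW : IsIsometrySemigroup W) (hc : SgCommute V W)
    {L : Submodule ℂ H} (hu : IsUnitarySemigroupOn W L) (t s : ℝ≥0) {x : H} (hx : x ∈ L) :
    V t (adjoint (W s) x) = adjoint (W s) (V t x) := by
  obtain ⟨z, _, rfl⟩ := (hu s).2.2 x hx
  rw [auxC_app hc, aux_adj_self _ (hW.2 s), aux_adj_self _ (hW.2 s)]

theorem aux_dc2 {V W : ℝ≥0 → H →L[ℂ] H} (hV : IsIsometrySemigroup V) (hc : SgCommute V W)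
    {L : Submodule ℂ H} (r1 : ReducedBy V L) (r2 : ReducedBy W L)
    (hu : IsUnitarySemigroupOn V L) (t s : ℝ≥0) {x : H} (hx : x ∈ L) :
    V t (adjoint (W s) x) = adjoint (W s) (V t x) := by
  obtain ⟨e, _, he⟩ := (hu t).2.2 _ (r2.2 s _ (r1.1 t x hx))
  have : e = adjoint (W s) x := by
    rw [← aux_adj_self _ (hV.2 t) e, he, auxDC_adj hc, aux_adj_self _ (hV.2 t)]
  rw [← he, this]

theorem aux_dc {V W : ℝ≥0 → H →L[ℂ] H} (hV : IsIsometrySemigroup V)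
    (hW : IsIsometrySemigroup W) (hc : SgCommute V W) {A B C : Submodule ℂ H}
    (htop : A ⊔ B ⊔ C = ⊤) (uA : IsUnitarySemigroupOn W A) (r1 : ReducedBy V B)
    (r2 : ReducedBy W B) (uB : IsUnitarySemigroupOn V B) (uC : IsUnitarySemigroupOn W C) :
    SgDoublyCommute V W := by
  refine ⟨hc, fun t s => ?_⟩
  ext x
  have hx : x ∈ A ⊔ B ⊔ C := htop ▸ Submodule.mem_top
  obtain ⟨y, hy, c, hcm, rfl⟩ := Submodule.mem_sup.1 hx
  obtain ⟨a, ha, b, hb, rfl⟩ := Submodule.mem_sup.1 hy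
  simp only [comp_apply, map_add, aux_dc1 hW hc uA t s ha, aux_dc2 hV hc r1 r2 uB t s hb,
    aux_dc1 hW hc uC t s hcm]

theorem aux_range_adj {W : H →L[ℂ] H} {L : Submodule ℂ H} (hu : RestrictsToUnitaryOn W L)
    {p : H} (hp : adjoint W p = 0) {y : H} (hy : y ∈ L) : ⟪y, p⟫_ℂ = 0 := by
  obtain ⟨z, _, rfl⟩ := hu.2.2 y hy
  rw [← adjoint_inner_right, hp, inner_zero_right]

theorem aux_mem {W : H →L[ℂ] H} {A B C : Submodule ℂ H}
    (oAB : OrthoSubspaces A B) (oAC : OrthoSubspaces A C) (oBC : OrthoSubspaces B C)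
    (htop : A ⊔ B ⊔ C = ⊤) (uA : RestrictsToUnitaryOn W A) (uC : RestrictsToUnitaryOn W C)
    {p : H} (hp : adjoint W p = 0) : p ∈ B := by
  have hx : p ∈ A ⊔ B ⊔ C := htop ▸ Submodule.mem_top
  obtain ⟨y, hy, c, hc, rfl⟩ := Submodule.mem_sup.1 hx
  obtain ⟨a, ha, b, hb, rfl⟩ := Submodule.mem_sup.1 hy
  have h1 := aux_range_adj uA hp ha
  have h2 := aux_range_adj uC hp hc
  rw [inner_add_right, inner_add_right, oAB a ha b hb, oAC a ha c hc, add_zero, add_zero,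
    inner_self_eq_zero] at h1
  rw [inner_add_right, inner_add_right, inner_eq_zero_symm.1 (oBC b hb c hc),
    inner_eq_zero_symm.1 (oAC a ha c hc), add_zero, zero_add, inner_self_eq_zero] at h2
  simpa [h1, h2] using hb

theorem aux_adj_self' (T : H →L[ℂ] H) (hT : ∀ x, ‖T x‖ = ‖x‖) (hs : Function.Surjective T)
    (x : H) : T (adjoint T x) = x := by
  obtain ⟨y, rfl⟩ := hs x
  rw [aux_adj_self T hT]

theorem aux_adj_comm {S T : H →L[ℂ] H} (hS : ∀ x, ‖S x‖ = ‖x‖) (hs : Function.Surjective S)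
    (h : S ∘L T = T ∘L S) (x : H) : adjoint S (T x) = T (adjoint S x) := by
  obtain ⟨y, rfl⟩ := hs x
  have h' : T (S y) = S (T y) := (congrArg (fun f : H →L[ℂ] H => f y) h).symm
  rw [h', aux_adj_self S hS, aux_adj_self S hS]

/-- The kernel of the adjoint of a restriction. -/
theorem aux_ker {K : Submodule ℂ H} [CompleteSpace K] {V : K →L[ℂ] K} {U : H →L[ℂ] H}
    (hU : ∀ h : K, U (h : H) = (V h : H)) (x : K) :
    adjoint V x = 0 ↔ adjoint U (x : H) ∈ Kᗮ := by
  rw [Submodule.mem_orthogonal]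
  constructor
  · intro h u hu
    rw [adjoint_inner_right, hU ⟨u, hu⟩, ← Submodule.coe_inner, ← adjoint_inner_right, h,
      inner_zero_right]
  · intro h
    have := h (adjoint V x : K) (adjoint V x).2
    rw [adjoint_inner_right, hU, ← Submodule.coe_inner, ← adjoint_inner_right,
      inner_self_eq_zero] at this
    exact this

end Helpers

/-- A commuting pair of C₀-semigroups of isometries is simultaneously doubly commuting
and dual doubly commuting iff `H = H_{p,u} ⊕ H_{u,p} ⊕ H_{u,u}` with the indicated
behaviour of the restrictions. -/
theorem doubly_and_dual_doubly_commuting_iff {G : Type} [NormedAddCommGroup G]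
    [InnerProductSpace ℂ G] [CompleteSpace G] (K : Submodule ℂ G) [CompleteSpace ↥K]
    (V1 V2 : ℝ≥0 → ↥K →L[ℂ] ↥K)
    (h1 : IsIsometrySemigroup V1) (h2 : IsIsometrySemigroup V2) (hc : SgCommute V1 V2)
    (U1 U2 : ℝ → G →L[ℂ] G) (hext : IsMinimalUnitaryExtension K V1 V2 U1 U2) :
    (SgDoublyCommute V1 V2 ∧ DualDoublyCommutes K U1 U2) ↔
    ∃ Hpu Hup Huu : Submodule ℂ ↥K,
      (IsClosed (Hpu : Set ↥K) ∧ IsClosed (Hup : Set ↥K) ∧ IsClosed (Huu : Set ↥K)) ∧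
      (OrthoSubspaces Hpu Hup ∧ OrthoSubspaces Hpu Huu ∧ OrthoSubspaces Hup Huu) ∧
      Hpu ⊔ Hup ⊔ Huu = ⊤ ∧
      (ReducedBy V1 Hpu ∧ ReducedBy V2 Hpu ∧ ReducedBy V1 Hup ∧ ReducedBy V2 Hup ∧
        ReducedBy V1 Huu ∧ ReducedBy V2 Huu) ∧
      (IsCnuOn V1 Hpu ∧ IsUnitarySemigroupOn V2 Hpu) ∧
      (IsUnitarySemigroupOn V1 Hup ∧ IsCnuOn V2 Hup) ∧
      (IsUnitarySemigroupOn V1 Huu ∧ IsUnitarySemigroupOn V2 Huu) := by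
  obtain ⟨g1, g2, gc, ge, -⟩ := hext
  constructor
  · rintro ⟨hdc, hdd⟩
    refine aux_forward h1 h2 hdc fun t s x hx1 hx2 => ?_
    rw [aux_ker (U := U1 t) (fun h => (ge t h).1)] at hx1
    rw [aux_ker (U := U2 s) (fun h => (ge s h).2)] at hx2
    have a2 : U2 s (adjoint (U2 s) (x : G)) = x := aux_adj_self' _ (g2.2.2.1 s) (g2.2.2.2.1 s) _
    have := (hdd t s t.2 s.2 _ hx2).2 0 (adjoint (U1 t) (x : G)) (Submodule.zero_mem _)
      (by rw [a2, sub_zero]; exact x.2) hx1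
      (by
        rw [← aux_adj_comm (g1.2.2.1 t) (g1.2.2.2.1 t) (gc t s), a2, sub_self]
        exact Submodule.zero_mem _)
    rw [map_zero] at this
    have h0 : (x : G) = 0 := by
      rw [← aux_adj_self' _ (g1.2.2.1 t) (g1.2.2.2.1 t) (x : G), ← this, map_zero]
    exact_mod_cast h0
  · rintro ⟨A, B, C, -, ⟨oAB, oAC, oBC⟩, htop, ⟨-, -, r1, r2, -, -⟩, ⟨-, uA⟩, ⟨uB, -⟩, -, uC⟩
    refine ⟨aux_dc h1 h2 hc htop uA r1 r2 uB uC, fun t s ht hs x hx => ⟨?_, ?_⟩⟩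
    · have := congrArg adjoint (gc t s)
      rw [adjoint_comp, adjoint_comp] at this
      exact (congrArg (fun f : G →L[ℂ] G => f x) this).symm
    · intro w w' hw hp hw' hp'
      lift t to ℝ≥0 using ht
      lift s to ℝ≥0 using hs
      have hp0 : adjoint (V2 s) ⟨U2 s x - w, hp⟩ = 0 := by
        rw [aux_ker (U := U2 s) (fun h => (ge s h).2)]
        simp only [map_sub, aux_adj_self _ (g2.2.2.1 s)]
        refine Submodule.sub_mem _ hx ?_
        rw [Submodule.mem_orthogonal]
        intro u hu
        rw [adjoint_inner_right, (ge s ⟨u, hu⟩).2]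
        exact Submodule.inner_right_of_mem_orthogonal (V2 s ⟨u, hu⟩).2 hw
      obtain ⟨q, -, hq⟩ := (uB t).2.2 _ (aux_mem oAB oAC oBC htop (uA s) (uC s) hp0)
      have hq' : adjoint (U1 t) (U2 s x - w) ∈ K := by
        have : U1 t (q : G) = U2 s x - w := by rw [(ge t q).1, hq]
        rw [← this, aux_adj_self _ (g1.2.2.1 t)]
        exact q.2
      have hw1 : adjoint (U1 t) w ∈ Kᗮ := by
        rw [Submodule.mem_orthogonal]
        intro u hu
        rw [adjoint_inner_right, (ge t ⟨u, hu⟩).1]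
        exact Submodule.inner_right_of_mem_orthogonal (V1 t ⟨u, hu⟩).2 hw
      have e1 : adjoint (U1 t) w - w' ∈ K := by
        have := Submodule.sub_mem _ hp' hq'
        rw [map_sub, aux_adj_comm (g1.2.2.1 t) (g1.2.2.2.1 t) (gc t s)] at this
        convert this using 1
        abel
      have e2 : adjoint (U1 t) w - w' ∈ Kᗮ := Submodule.sub_mem _ hw1 hw'
      have := Submodule.inner_right_of_mem_orthogonal e1 e2
      rw [inner_self_eq_zero] at this
      exact sub_eq_zero.1 this
end
end
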